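/- arXiv:math-ph/0512014 — 6 statements merged into one kernel-verified Lean document; each statement's English description precedes it below -/
import Mathlib

section
/- Let d ≥ 3 and 0 ≤ a < 1. There exists a constant C_a, depending only on a and d, such that for every measurable h : ℝ^d → ℂ with ‖h‖_{2d,0} := sup_{x∈ℝ^d} ⟨x⟩^{2d}|h(x)| < ∞, every η ∈ (0,1], every α ∈ ℝ and every q ∈ ℝ^d, one has ∫_{ℝ^d} |h(p−q)| / |α − |p|²/2 + iη|^{2−a} dp ≤ C_a · ‖h‖_{2d,0} · η^{−(1−a)} / (⟨α⟩^{a/2} · ⟨|q| − √(2|α|)⟩). -/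
open MeasureTheory

open Set Metric Module
open scoped ENNReal

/-!
Write `r = √(2|α|)` for the radius of the energy shell and `R = |α - |p|²/2 + iη|`. Splitting off
one power of the decay of `h`, the triangle inequality
`1 + ||q| - r| ≤ (1 + |p - q|) (1 + ||p| - r|)` produces the localization in `q`, while
`(1 + r) (1 + ||p| - r|) ≲ (1 + |p|) + R` produces the decay in `α`. What remains to be integrated
against an integrable weight in `p - q` is `R ^ (1 - b) ≤ η ^ (1 - b)` and `(1 + |p|) R ^ (-b)`,
where `b = 2 - a`. For the latter, the weight has mass `O(s / (1 + s))` on the sphere of radius `s`,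
so one is left with `∫ s R ^ (-b) ds`, which the energy variable `s ^ 2 / 2` turns into a scaling
integral.
-/

theorem one_add_norm_rpow_neg_le_of_norm_sub_le_one {E : Type*} [SeminormedAddCommGroup E]
    {k : ℝ} (hk : 0 ≤ k) {x y : E} (hxy : ‖y - x‖ ≤ 1) :
    (1 + ‖x‖) ^ (-k) ≤ 2 ^ k * (1 + ‖y‖) ^ (-k) := by
  have hy : (1 + ‖y‖) / 2 ≤ 1 + ‖x‖ := by
    linarith [norm_nonneg x, norm_sub_norm_le y x]
  calc
    (1 + ‖x‖) ^ (-k) ≤ ((1 + ‖y‖) / 2) ^ (-k) :=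
      Real.rpow_le_rpow_of_nonpos (by positivity) hy (by linarith)
    _ = 2 ^ k * (1 + ‖y‖) ^ (-k) := by
      rw [Real.div_rpow (by positivity) (by positivity), Real.rpow_neg (x := 2) (by norm_num),
        div_inv_eq_mul, mul_comm]

section Radial

variable {E : Type*} [NormedAddCommGroup E] [NormedSpace ℝ E] [FiniteDimensional ℝ E]
  [MeasurableSpace E] [BorelSpace E] (μ : Measure E) [μ.IsAddHaarMeasure]

theorem lintegral_eq_lintegral_Ioi_lintegral_toSphere [Nontrivial E] {f : E → ℝ≥0∞}
    (hf : Measurable f) :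
    ∫⁻ x, f x ∂μ = ∫⁻ s in Ioi (0 : ℝ), ENNReal.ofReal (s ^ (finrank ℝ E - 1)) *
      ∫⁻ ω : sphere (0 : E) 1, f (s • (ω : E)) ∂μ.toSphere := by
  have hmeas : Measurable fun z : sphere (0 : E) 1 × Ioi (0 : ℝ) ↦ f ((z.2 : ℝ) • (z.1 : E)) := by
    fun_prop
  have hmeas' : Measurable fun s : Ioi (0 : ℝ) ↦
      ∫⁻ ω : sphere (0 : E) 1, f ((s : ℝ) • (ω : E)) ∂μ.toSphere := hmeas.lintegral_prod_left'
  calc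
    ∫⁻ x, f x ∂μ = ∫⁻ x : ({(0)}ᶜ : Set E), f x ∂(μ.comap (↑)) := by
      rw [lintegral_subtype_comap (measurableSet_singleton _).compl, restrict_compl_singleton]
    _ = ∫⁻ z, f ((z.2 : ℝ) • (z.1 : E)) ∂μ.toSphere.prod (.volumeIoiPow (finrank ℝ E - 1)) := by
      rw [← μ.measurePreserving_homeomorphUnitSphereProd.lintegral_comp hmeas]
      refine lintegral_congr fun x ↦ ?_
      congr 1
      have hx : ‖(x : E)‖ ≠ 0 := norm_ne_zero_iff.2 x.2
      simp [smul_smul, hx]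
    _ = ∫⁻ s : Ioi (0 : ℝ), ∫⁻ ω : sphere (0 : E) 1, f ((s : ℝ) • (ω : E)) ∂μ.toSphere
          ∂.volumeIoiPow (finrank ℝ E - 1) := lintegral_prod_symm' _ hmeas
    _ = _ := by
      rw [Measure.volumeIoiPow, lintegral_withDensity_eq_lintegral_mul _ (by fun_prop) hmeas',
        ← lintegral_subtype_comap measurableSet_Ioi]
      rfl

/- The weight varies by at most a constant factor over the shell between the spheres of radius `s`
and `s + 1`, so its integral over the sphere is controlled by that over the shell. -/
theorem ofReal_pow_mul_lintegral_toSphere_one_add_norm_sub_le [Nontrivial E] {k s : ℝ}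
    (hk : 0 ≤ k) (hs : 0 ≤ s) (q : E) :
    ENNReal.ofReal (s ^ (finrank ℝ E - 1)) * ∫⁻ ω : sphere (0 : E) 1,
        ENNReal.ofReal ((1 + ‖s • (ω : E) - q‖) ^ (-k)) ∂μ.toSphere ≤
      ENNReal.ofReal (2 ^ k) * ∫⁻ x, ENNReal.ofReal ((1 + ‖x‖) ^ (-k)) ∂μ := by
  have hshift (t : ℝ) (ht : t ∈ Ioc s (s + 1)) (ω : sphere (0 : E) 1) :
      (1 + ‖s • (ω : E) - q‖) ^ (-k) ≤ 2 ^ k * (1 + ‖t • (ω : E) - q‖) ^ (-k) := by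
    apply one_add_norm_rpow_neg_le_of_norm_sub_le_one hk
    rw [sub_sub_sub_cancel_right, ← sub_smul, norm_smul, norm_eq_of_mem_sphere ω, mul_one,
      Real.norm_of_nonneg (by linarith [ht.1])]
    linarith [ht.2]
  have hmeas : Measurable fun x : E ↦ ENNReal.ofReal ((1 + ‖x - q‖) ^ (-k)) := by fun_prop
  calc
    _ = ∫⁻ _ in Ioc s (s + 1), ENNReal.ofReal (s ^ (finrank ℝ E - 1)) *
        ∫⁻ ω : sphere (0 : E) 1,
          ENNReal.ofReal ((1 + ‖s • (ω : E) - q‖) ^ (-k)) ∂μ.toSphere := by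
      simp
    _ ≤ ∫⁻ t in Ioc s (s + 1), ENNReal.ofReal (2 ^ k) *
        (ENNReal.ofReal (t ^ (finrank ℝ E - 1)) * ∫⁻ ω : sphere (0 : E) 1,
          ENNReal.ofReal ((1 + ‖t • (ω : E) - q‖) ^ (-k)) ∂μ.toSphere) := by
      refine setLIntegral_mono' measurableSet_Ioc fun t ht ↦ ?_
      rw [mul_left_comm, ← lintegral_const_mul' (ENNReal.ofReal (2 ^ k)) _ ENNReal.ofReal_ne_top]
      gcongr with ω
      · exact ht.1.le
      · rw [← ENNReal.ofReal_mul (by positivity)]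
        exact ENNReal.ofReal_le_ofReal (hshift t ht ω)
    _ ≤ ∫⁻ t in Ioi 0, ENNReal.ofReal (2 ^ k) *
        (ENNReal.ofReal (t ^ (finrank ℝ E - 1)) * ∫⁻ ω : sphere (0 : E) 1,
          ENNReal.ofReal ((1 + ‖t • (ω : E) - q‖) ^ (-k)) ∂μ.toSphere) :=
      lintegral_mono_set fun t ht ↦ hs.trans_lt ht.1
    _ = _ := by
      rw [lintegral_const_mul' _ _ ENNReal.ofReal_ne_top,
        ← lintegral_eq_lintegral_Ioi_lintegral_toSphere μ hmeas,
        lintegral_sub_right_eq_self (fun x ↦ ENNReal.ofReal ((1 + ‖x‖) ^ (-k)))]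

theorem exists_ofReal_pow_mul_lintegral_toSphere_le (hE : 2 ≤ finrank ℝ E) {k : ℝ}
    (hk : finrank ℝ E < k) :
    ∃ C ≠ ∞, ∀ q : E, ∀ s : ℝ, 0 < s →
      ENNReal.ofReal (s ^ (finrank ℝ E - 1)) * ∫⁻ ω : sphere (0 : E) 1,
          ENNReal.ofReal ((1 + ‖s • (ω : E) - q‖) ^ (-k)) ∂μ.toSphere ≤
        C * ENNReal.ofReal (s / (1 + s)) := by
  have : Nontrivial E := nontrivial_of_finrank_pos (R := ℝ) (by omega)
  have hk0 : 0 ≤ k := (Nat.cast_nonneg _).trans hk.le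
  set W : ℝ≥0∞ := ∫⁻ x, ENNReal.ofReal ((1 + ‖x‖) ^ (-k)) ∂μ
  have hW : W ≠ ∞ := (finite_integral_one_add_norm hk).ne
  refine ⟨(μ.toSphere univ + ENNReal.ofReal (2 ^ k) * W) * ENNReal.ofReal 2, by finiteness,
    fun q s hs ↦ ?_⟩
  rw [mul_assoc, ← ENNReal.ofReal_mul zero_le_two]
  rcases le_total s 1 with hs1 | hs1
  · have hpow : s ^ (finrank ℝ E - 1) ≤ 2 * (s / (1 + s)) :=
      calc
        s ^ (finrank ℝ E - 1) ≤ s := pow_le_of_le_one hs.le hs1 (by omega)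
        _ ≤ 2 * (s / (1 + s)) := by
          rw [← mul_div_assoc, le_div_iff₀ (by positivity)]
          nlinarith
    have hle_one (ω : sphere (0 : E) 1) : (1 + ‖s • (ω : E) - q‖) ^ (-k) ≤ 1 :=
      Real.rpow_le_one_of_one_le_of_nonpos (le_add_of_nonneg_right (norm_nonneg _)) (by linarith)
    calc
      _ ≤ ENNReal.ofReal (2 * (s / (1 + s))) *
          ∫⁻ _ : sphere (0 : E) 1, ENNReal.ofReal 1 ∂μ.toSphere := by
        gcongr with ω
        exact hle_one ω
      _ = μ.toSphere univ * ENNReal.ofReal (2 * (s / (1 + s))) := by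
        rw [lintegral_const, ENNReal.ofReal_one, one_mul, mul_comm]
      _ ≤ _ := by
        gcongr
        exact le_self_add
  · have hratio : 1 ≤ 2 * (s / (1 + s)) := by
      rw [← mul_div_assoc, le_div_iff₀ (by positivity)]
      linarith
    calc
      _ ≤ ENNReal.ofReal (2 ^ k) * W :=
        ofReal_pow_mul_lintegral_toSphere_one_add_norm_sub_le μ hk0 hs.le q
      _ ≤ μ.toSphere univ + ENNReal.ofReal (2 ^ k) * W := le_add_self
      _ ≤ _ := le_mul_of_one_le_right' (ENNReal.one_le_ofReal.2 hratio)

theorem exists_lintegral_one_add_norm_sub_mul_fun_norm_le (hE : 2 ≤ finrank ℝ E) {k : ℝ}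
    (hk : finrank ℝ E < k) :
    ∃ C ≠ ∞, ∀ q : E, ∀ g : ℝ → ℝ≥0∞, Measurable g →
      ∫⁻ p, ENNReal.ofReal ((1 + ‖p - q‖) ^ (-k)) * g ‖p‖ ∂μ ≤
        C * ∫⁻ s in Ioi (0 : ℝ), ENNReal.ofReal (s / (1 + s)) * g s := by
  have : Nontrivial E := nontrivial_of_finrank_pos (R := ℝ) (by omega)
  obtain ⟨C, hC, hsphere⟩ := exists_ofReal_pow_mul_lintegral_toSphere_le μ hE hk
  refine ⟨C, hC, fun q g hg ↦ ?_⟩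
  rw [lintegral_eq_lintegral_Ioi_lintegral_toSphere μ (by fun_prop),
    ← lintegral_const_mul' _ _ hC]
  refine setLIntegral_mono' measurableSet_Ioi fun s (hs : 0 < s) ↦ ?_
  have hnorm (ω : sphere (0 : E) 1) : ‖s • (ω : E)‖ = s := by
    rw [norm_smul, norm_eq_of_mem_sphere ω, mul_one, Real.norm_of_nonneg hs.le]
  simp_rw [hnorm]
  rw [lintegral_mul_const _ (by fun_prop), ← mul_assoc, ← mul_assoc]
  exact mul_le_mul_left (hsphere q s hs) (g s)

end Radial

theorem lintegral_Ioi_mul_comp_sq_div_two_le (f : ℝ → ℝ≥0∞) :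
    ∫⁻ s in Ioi (0 : ℝ), ENNReal.ofReal s * f (s ^ 2 / 2) ≤ ∫⁻ u, f u := by
  have hderiv (s : ℝ) (_ : s ∈ Ioi (0 : ℝ)) :
      HasDerivWithinAt (fun s : ℝ ↦ s ^ 2 / 2) s (Ioi 0) s :=
    (((hasDerivAt_pow 2 s).div_const 2).congr_deriv (by simp)).hasDerivWithinAt
  have hmono : MonotoneOn (fun s : ℝ ↦ s ^ 2 / 2) (Ioi 0) := fun x (hx : 0 < x) y _ hxy ↦ by
    dsimp only
    gcongr
  rw [← lintegral_image_eq_lintegral_deriv_mul_of_monotoneOn measurableSet_Ioi hderiv hmono]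
  exact setLIntegral_le_lintegral _ _

theorem lintegral_norm_add_I_rpow_neg_lt_top {b : ℝ} (hb : 1 < b) :
    ∫⁻ t : ℝ, ENNReal.ofReal (‖(t : ℂ) + Complex.I‖ ^ (-b)) < ∞ := by
  have hnorm (t : ℝ) : ‖(t : ℂ) + Complex.I‖ ^ (-b) = (1 + ‖t‖ ^ 2) ^ (-b / 2) := by
    rw [Real.rpow_div_two_eq_sqrt _ (by positivity)]
    simpa [add_comm] using congrArg (· ^ (-b)) (Complex.norm_add_mul_I t 1)
  simp_rw [hnorm]
  exact (integrable_rpow_neg_one_add_norm_sq (by simpa using hb)).lintegral_lt_top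

theorem lintegral_norm_add_mul_I_rpow_neg {η : ℝ} (hη : 0 < η) (b : ℝ) :
    ∫⁻ u : ℝ, ENNReal.ofReal (‖(u : ℂ) + (η : ℂ) * Complex.I‖ ^ (-b)) =
      ENNReal.ofReal (η ^ (1 - b)) *
        ∫⁻ t : ℝ, ENNReal.ofReal (‖(t : ℂ) + Complex.I‖ ^ (-b)) := by
  have hscale (t : ℝ) : ‖((η * t : ℝ) : ℂ) + (η : ℂ) * Complex.I‖ ^ (-b) =
      η ^ (-b) * ‖(t : ℂ) + Complex.I‖ ^ (-b) := by
    rw [Complex.ofReal_mul, ← mul_add, norm_mul, Complex.norm_of_nonneg hη.le,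
      Real.mul_rpow hη.le (norm_nonneg _)]
  calc
    _ = ENNReal.ofReal η *
        ∫⁻ t : ℝ, ENNReal.ofReal (‖((η * t : ℝ) : ℂ) + (η : ℂ) * Complex.I‖ ^ (-b)) := by
      conv_lhs =>
        rw [← Real.smul_map_volume_mul_left hη.ne', lintegral_smul_measure,
          lintegral_map (by fun_prop) (by fun_prop), abs_of_pos hη, smul_eq_mul]
    _ = _ := by
      simp_rw [hscale, ENNReal.ofReal_mul (Real.rpow_nonneg hη.le _)]
      rw [lintegral_const_mul' _ _ ENNReal.ofReal_ne_top, ← mul_assoc, ← ENNReal.ofReal_mul hη.le,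
        sub_eq_add_neg, Real.rpow_add hη, Real.rpow_one]

theorem lintegral_Ioi_mul_norm_sub_add_mul_I_rpow_neg_le {η : ℝ} (hη : 0 < η) (b α : ℝ) :
    ∫⁻ s in Ioi (0 : ℝ), ENNReal.ofReal
        (s * ‖((α - s ^ 2 / 2 : ℝ) : ℂ) + (η : ℂ) * Complex.I‖ ^ (-b)) ≤
      ENNReal.ofReal (η ^ (1 - b)) *
        ∫⁻ t : ℝ, ENNReal.ofReal (‖(t : ℂ) + Complex.I‖ ^ (-b)) := by
  set f : ℝ → ℝ≥0∞ := fun u ↦ ENNReal.ofReal (‖(u : ℂ) + (η : ℂ) * Complex.I‖ ^ (-b))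
  calc
    _ = ∫⁻ s in Ioi (0 : ℝ), ENNReal.ofReal s * f (α - s ^ 2 / 2) :=
      setLIntegral_congr_fun measurableSet_Ioi fun s (hs : 0 < s) ↦ ENNReal.ofReal_mul hs.le
    _ ≤ ∫⁻ u, f (α - u) := lintegral_Ioi_mul_comp_sq_div_two_le fun u ↦ f (α - u)
    _ = ∫⁻ u, f u := lintegral_sub_left_eq_self f α
    _ = _ := lintegral_norm_add_mul_I_rpow_neg hη b

theorem one_add_abs_norm_sub_le_mul {E : Type*} [SeminormedAddCommGroup E] (p q : E) (r : ℝ) :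
    1 + |‖q‖ - r| ≤ (1 + ‖p - q‖) * (1 + |‖p‖ - r|) := by
  have htri : |‖q‖ - r| ≤ |‖p‖ - ‖q‖| + |‖p‖ - r| := by
    simpa [abs_sub_comm ‖q‖ ‖p‖] using abs_sub_le ‖q‖ ‖p‖ r
  nlinarith [abs_norm_sub_norm_le p q, mul_nonneg (norm_nonneg (p - q)) (abs_nonneg (‖p‖ - r))]

theorem one_add_mul_one_add_abs_sub_le {r s : ℝ} (hr : 0 ≤ r) (hs : 0 ≤ s) :
    (1 + r) * (1 + |s - r|) ≤ 3 * (1 + s + |s ^ 2 - r ^ 2|) := by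
  have hfactor : |s ^ 2 - r ^ 2| = (s + r) * |s - r| := by
    rw [sq_sub_sq, abs_mul, abs_of_nonneg (add_nonneg hs hr)]
  have hr_le : r ≤ s + |s - r| := by linarith [neg_abs_le (s - r)]
  have hle_add : |s - r| ≤ s + r := abs_le.2 ⟨by linarith, by linarith⟩
  have hle : |s - r| ≤ 1 + (s + r) * |s - r| :=
    calc
      |s - r| ≤ 1 + |s - r| * |s - r| := by nlinarith [sq_nonneg (|s - r| - 1)]
      _ ≤ 1 + (s + r) * |s - r| := by gcongr
  rw [hfactor]
  linarith [mul_nonneg hs (abs_nonneg (s - r))]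

theorem one_add_sqrt_mul_one_add_abs_sub_le (α η : ℝ) {s : ℝ} (hs : 0 ≤ s) :
    (1 + √(2 * |α|)) * (1 + |s - √(2 * |α|)|) ≤
      6 * (1 + s + ‖((α - s ^ 2 / 2 : ℝ) : ℂ) + (η : ℂ) * Complex.I‖) := by
  have hre : |α - s ^ 2 / 2| ≤ ‖((α - s ^ 2 / 2 : ℝ) : ℂ) + (η : ℂ) * Complex.I‖ := by
    rw [Complex.norm_add_mul_I]
    exact Real.abs_le_sqrt (le_add_of_nonneg_right (sq_nonneg η))
  have habs : |s ^ 2 - √(2 * |α|) ^ 2| ≤ 2 * |α - s ^ 2 / 2| :=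
    calc
      |s ^ 2 - √(2 * |α|) ^ 2| = 2 * |(|α| - |s ^ 2 / 2|)| := by
        rw [Real.sq_sqrt (by positivity), abs_sub_comm |α|, abs_of_nonneg (a := s ^ 2 / 2)
          (by positivity), show s ^ 2 - 2 * |α| = 2 * (s ^ 2 / 2 - |α|) by ring, abs_mul, abs_two]
      _ ≤ 2 * |α - s ^ 2 / 2| :=
        mul_le_mul_of_nonneg_left (abs_abs_sub_abs_le_abs_sub _ _) zero_le_two
  linarith [one_add_mul_one_add_abs_sub_le (Real.sqrt_nonneg (2 * |α|)) hs]

theorem one_add_norm_sub_rpow_mul_norm_rpow_le {E : Type*} [SeminormedAddCommGroup E] {b η : ℝ}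
    (hb : 1 ≤ b) (hη : 0 < η) (k α : ℝ) (p q : E) :
    (1 + ‖p - q‖) ^ (-(k + 1)) *
        ‖((α - ‖p‖ ^ 2 / 2 : ℝ) : ℂ) + (η : ℂ) * Complex.I‖ ^ (-b) ≤
      6 * ((1 + √(2 * |α|)) * (1 + |‖q‖ - √(2 * |α|)|))⁻¹ * ((1 + ‖p - q‖) ^ (-k) *
        (η ^ (1 - b) +
          (1 + ‖p‖) * ‖((α - ‖p‖ ^ 2 / 2 : ℝ) : ℂ) + (η : ℂ) * Complex.I‖ ^ (-b))) := by
  set r := √(2 * |α|)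
  set R := ‖((α - ‖p‖ ^ 2 / 2 : ℝ) : ℂ) + (η : ℂ) * Complex.I‖ with hR
  set T := 1 + ‖p - q‖
  have hηR : η ≤ R := by
    rw [hR, Complex.norm_add_mul_I]
    exact Real.le_sqrt_of_sq_le (le_add_of_nonneg_left (sq_nonneg _))
  have hR0 : 0 < R := hη.trans_le hηR
  have hT0 : 0 < T := by positivity
  have hbracket : (1 + r) * (1 + |‖q‖ - r|) ≤ T * (6 * (1 + ‖p‖ + R)) :=
    calc
      (1 + r) * (1 + |‖q‖ - r|) ≤ (1 + r) * (T * (1 + |‖p‖ - r|)) := by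
        gcongr
        exact one_add_abs_norm_sub_le_mul p q r
      _ = T * ((1 + r) * (1 + |‖p‖ - r|)) := by ring
      _ ≤ T * (6 * (1 + ‖p‖ + R)) :=
        mul_le_mul_of_nonneg_left
          (one_add_sqrt_mul_one_add_abs_sub_le α η (norm_nonneg p)) hT0.le
  have hT : T ^ (-(k + 1)) * T = T ^ (-k) := by
    rw [← Real.rpow_add_one hT0.ne']
    ring_nf
  have hRR : R * R ^ (-b) ≤ η ^ (1 - b) :=
    calc
      R * R ^ (-b) = R ^ (1 - b) := by rw [sub_eq_add_neg, Real.rpow_add hR0, Real.rpow_one]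
      _ ≤ η ^ (1 - b) := Real.rpow_le_rpow_of_nonpos hη hηR (by linarith)
  rw [mul_right_comm, ← div_eq_mul_inv, le_div_iff₀ (by positivity)]
  calc
    T ^ (-(k + 1)) * R ^ (-b) * ((1 + r) * (1 + |‖q‖ - r|)) ≤
        T ^ (-(k + 1)) * R ^ (-b) * (T * (6 * (1 + ‖p‖ + R))) := by gcongr
    _ = 6 * (T ^ (-(k + 1)) * T * (R * R ^ (-b) + (1 + ‖p‖) * R ^ (-b))) := by ring
    _ ≤ 6 * (T ^ (-k) * (η ^ (1 - b) + (1 + ‖p‖) * R ^ (-b))) := by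
      rw [hT]
      gcongr

theorem le_mul_one_add_norm_rpow_neg {E : Type*} [NormedAddCommGroup E] {κ N y : ℝ} (hκ : 0 < κ)
    (hN : 0 ≤ N) {x : E} (h : (1 + ‖x‖ ^ 2) ^ κ * y ≤ N) :
    y ≤ N * (2 ^ κ * (1 + ‖x‖) ^ (-(2 * κ))) :=
  calc
    y ≤ N * (1 + ‖x‖ ^ 2) ^ (-κ) := by
      rw [Real.rpow_neg (by positivity), ← div_eq_mul_inv, le_div_iff₀ (by positivity), mul_comm]
      exact h
    _ ≤ N * (2 ^ κ * (1 + ‖x‖) ^ (-(2 * κ))) := by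
      gcongr
      simpa [neg_div] using rpow_neg_one_add_norm_sq_le x (r := 2 * κ) (by positivity)

theorem sqrt_one_add_sq_rpow_mul_sqrt_le {c : ℝ} (hc : c ≤ 1 / 2) (α x : ℝ) :
    √(1 + α ^ 2) ^ c * √(1 + (x - √(2 * |α|)) ^ 2) ≤
      (1 + √(2 * |α|)) * (1 + |x - √(2 * |α|)|) := by
  have hsqrt (y : ℝ) : √(1 + y ^ 2) ≤ 1 + |y| := by simpa using sqrt_one_add_norm_sq_le y
  have hα : √(1 + α ^ 2) ≤ (1 + √(2 * |α|)) ^ 2 := by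
    have h := Real.sq_sqrt (by positivity : 0 ≤ 2 * |α|)
    nlinarith [hsqrt α, Real.sqrt_nonneg (2 * |α|), abs_nonneg α]
  gcongr
  · calc
      √(1 + α ^ 2) ^ c ≤ √(1 + α ^ 2) ^ (1 / 2 : ℝ) := by
        gcongr
        exact Real.one_le_sqrt.2 (by nlinarith)
      _ = √√(1 + α ^ 2) := (Real.sqrt_eq_rpow _).symm
      _ ≤ 1 + √(2 * |α|) := (Real.sqrt_le_left (by positivity)).2 hα
  · exact hsqrt _

section Resolvent

variable {E : Type*} [NormedAddCommGroup E] [NormedSpace ℝ E] [FiniteDimensional ℝ E]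
  [MeasurableSpace E] [BorelSpace E] (μ : Measure E) [μ.IsAddHaarMeasure]

theorem exists_lintegral_one_add_norm_sub_mul_norm_rpow_le (hE : 2 ≤ finrank ℝ E) {k b : ℝ}
    (hk : finrank ℝ E < k) (hb : 1 < b) :
    ∃ C > (0 : ℝ), ∀ η : ℝ, 0 < η → ∀ α : ℝ, ∀ q : E,
      ∫⁻ p, ENNReal.ofReal ((1 + ‖p - q‖) ^ (-(k + 1)) *
          ‖((α - ‖p‖ ^ 2 / 2 : ℝ) : ℂ) + (η : ℂ) * Complex.I‖ ^ (-b)) ∂μ ≤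
        ENNReal.ofReal
          (C * (η ^ (1 - b) * ((1 + √(2 * |α|)) * (1 + |‖q‖ - √(2 * |α|)|))⁻¹)) := by
  obtain ⟨A, hA, hradial⟩ := exists_lintegral_one_add_norm_sub_mul_fun_norm_le μ hE hk
  set W : ℝ≥0∞ := ∫⁻ x, ENNReal.ofReal ((1 + ‖x‖) ^ (-k)) ∂μ
  set K : ℝ≥0∞ := ∫⁻ t : ℝ, ENNReal.ofReal (‖(t : ℂ) + Complex.I‖ ^ (-b))
  have hW : W ≠ ∞ := (finite_integral_one_add_norm hk).ne
  have hK : K ≠ ∞ := (lintegral_norm_add_I_rpow_neg_lt_top hb).ne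
  have hWAK : W + A * K ≠ ∞ := by finiteness
  refine ⟨6 * ((W + A * K).toReal + 1), by positivity, fun η hη α q ↦ ?_⟩
  set m := ((1 + √(2 * |α|)) * (1 + |‖q‖ - √(2 * |α|)|))⁻¹
  set R : ℝ → ℝ := fun s ↦ ‖((α - s ^ 2 / 2 : ℝ) : ℂ) + (η : ℂ) * Complex.I‖
  have hshell : ∫⁻ s in Ioi (0 : ℝ),
      ENNReal.ofReal (s / (1 + s)) * ENNReal.ofReal ((1 + s) * R s ^ (-b)) ≤
        ENNReal.ofReal (η ^ (1 - b)) * K := by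
    refine le_of_eq_of_le (setLIntegral_congr_fun measurableSet_Ioi fun s (hs : 0 < s) ↦ ?_)
      (lintegral_Ioi_mul_norm_sub_add_mul_I_rpow_neg_le hη b α)
    rw [← ENNReal.ofReal_mul (by positivity), ← mul_assoc, div_mul_cancel₀ _ (by positivity)]
  calc
    _ ≤ ∫⁻ p, ENNReal.ofReal (6 * m) * (ENNReal.ofReal ((1 + ‖p - q‖) ^ (-k)) *
          ENNReal.ofReal (η ^ (1 - b)) + ENNReal.ofReal ((1 + ‖p - q‖) ^ (-k)) *
          ENNReal.ofReal ((1 + ‖p‖) * R ‖p‖ ^ (-b))) ∂μ := by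
      gcongr with p
      rw [← mul_add, ← ENNReal.ofReal_add (by positivity) (by positivity),
        ← ENNReal.ofReal_mul (by positivity), ← ENNReal.ofReal_mul (by positivity)]
      exact ENNReal.ofReal_le_ofReal (one_add_norm_sub_rpow_mul_norm_rpow_le hb.le hη k α p q)
    _ ≤ ENNReal.ofReal (6 * m) *
        (W * ENNReal.ofReal (η ^ (1 - b)) + A * (ENNReal.ofReal (η ^ (1 - b)) * K)) := by
      rw [lintegral_const_mul' _ _ ENNReal.ofReal_ne_top, lintegral_add_left (by fun_prop),
        lintegral_mul_const _ (by fun_prop),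
        lintegral_sub_right_eq_self (fun x ↦ ENNReal.ofReal ((1 + ‖x‖) ^ (-k)))]
      gcongr
      exact (hradial q (fun s ↦ ENNReal.ofReal ((1 + s) * R s ^ (-b))) (by fun_prop)).trans
        (by gcongr)
    _ = ENNReal.ofReal (6 * m * η ^ (1 - b)) * (W + A * K) := by
      rw [ENNReal.ofReal_mul (p := 6 * m) (by positivity)]
      ring
    _ ≤ ENNReal.ofReal (6 * m * η ^ (1 - b)) * ENNReal.ofReal ((W + A * K).toReal + 1) := by
      gcongr
      exact (ENNReal.le_ofReal_iff_toReal_le hWAK (by positivity)).2 (by linarith)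
    _ = _ := by
      rw [← ENNReal.ofReal_mul (by positivity)]
      ring_nf

theorem resolvent_power_weighted_bound_general {F : Type*} [NormedAddCommGroup F]
    (hE : 2 ≤ finrank ℝ E) {κ b c : ℝ} (hκ : finrank ℝ E + 1 < 2 * κ) (hb : 1 < b)
    (hc : c ≤ 1 / 2) :
    ∃ C > (0 : ℝ), ∀ h : E → F, AEStronglyMeasurable h μ →
      ∀ N : ℝ, (∀ x, (1 + ‖x‖ ^ 2) ^ κ * ‖h x‖ ≤ N) →
      ∀ η : ℝ, 0 < η → ∀ α : ℝ, ∀ q : E,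
        ∫ p, ‖h (p - q)‖ / ‖((α - ‖p‖ ^ 2 / 2 : ℝ) : ℂ) + (η : ℂ) * Complex.I‖ ^ b ∂μ ≤
          C * N * η ^ (1 - b) / (√(1 + α ^ 2) ^ c * √(1 + (‖q‖ - √(2 * |α|)) ^ 2)) := by
  have hκ0 : 0 < κ := by linarith [(finrank ℝ E).cast_nonneg (α := ℝ)]
  obtain ⟨C, hC, hbound⟩ := exists_lintegral_one_add_norm_sub_mul_norm_rpow_le μ hE
    (k := 2 * κ - 1) (by linarith) hb
  refine ⟨2 ^ κ * C, by positivity, fun h hh N hN η hη α q ↦ ?_⟩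
  have hN0 : 0 ≤ N := le_trans (by positivity) (hN 0)
  set m := ((1 + √(2 * |α|)) * (1 + |‖q‖ - √(2 * |α|)|))⁻¹ with hm
  set R : E → ℝ := fun p ↦ ‖((α - ‖p‖ ^ 2 / 2 : ℝ) : ℂ) + (η : ℂ) * Complex.I‖
  have hpoint (p : E) : ‖h (p - q)‖ / R p ^ b ≤
      N * 2 ^ κ * ((1 + ‖p - q‖) ^ (-(2 * κ - 1 + 1)) * R p ^ (-b)) := by
    rw [div_eq_mul_inv, ← Real.rpow_neg (norm_nonneg _), ← mul_assoc, mul_assoc N, sub_add_cancel]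
    gcongr
    exact le_mul_one_add_norm_rpow_neg hκ0 hN0 (hN _)
  have hlintegral : ∫⁻ p, ENNReal.ofReal (‖h (p - q)‖ / R p ^ b) ∂μ ≤
      ENNReal.ofReal (N * 2 ^ κ * (C * (η ^ (1 - b) * m))) := by
    grw [lintegral_mono fun p ↦ ENNReal.ofReal_le_ofReal (hpoint p)]
    simp_rw [ENNReal.ofReal_mul (p := N * 2 ^ κ) (by positivity)]
    rw [lintegral_const_mul' _ _ ENNReal.ofReal_ne_top]
    gcongr
    exact hbound η hη α q
  have hmeas : AEStronglyMeasurable (fun p ↦ ‖h (p - q)‖ / R p ^ b) μ :=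
    (hh.comp_measurePreserving (measurePreserving_sub_right μ q)).norm.mul
      (Measurable.aestronglyMeasurable (by fun_prop : Measurable fun p ↦ (R p ^ b)⁻¹))
  calc
    _ = (∫⁻ p, ENNReal.ofReal (‖h (p - q)‖ / R p ^ b) ∂μ).toReal :=
      integral_eq_lintegral_of_nonneg_ae (ae_of_all _ fun p ↦ by positivity) hmeas
    _ ≤ N * 2 ^ κ * (C * (η ^ (1 - b) * m)) :=
      ENNReal.toReal_le_of_le_ofReal (by positivity) hlintegral
    _ = 2 ^ κ * C * N * η ^ (1 - b) / ((1 + √(2 * |α|)) * (1 + |‖q‖ - √(2 * |α|)|)) := by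
      rw [hm]
      ring
    _ ≤ _ := by
      gcongr _ / ?_
      exact sqrt_one_add_sq_rpow_mul_sqrt_le hc α ‖q‖

end Resolvent

/-- Estimate (2.11) of the paper's Lemma 3.3: for `d ≥ 3` and `0 ≤ a < 1` there is a
constant `C_a` such that for every function `h` with finite weighted sup-norm
`‖h‖_{2d,0} := sup_x ⟨x⟩^{2d}‖h x‖` (here `N` is any such bound), every `η ∈ (0,1]`,
`α ∈ ℝ` and `q ∈ ℝ^d`, the `(2-a)`-power of the free resolvent integrates to at most
`C_a ‖h‖_{2d,0} η^{-(1-a)} / (⟨α⟩^{a/2} ⟨|q| - √(2|α|)⟩)`. -/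
theorem resolvent_power_weighted_bound
    (d : ℕ) (hd : 3 ≤ d) (a : ℝ) (ha0 : 0 ≤ a) (ha1 : a < 1) :
    ∃ C > (0 : ℝ), ∀ h : EuclideanSpace ℝ (Fin d) → ℂ, Measurable h →
      ∀ N : ℝ, (∀ x : EuclideanSpace ℝ (Fin d), (1 + ‖x‖ ^ 2) ^ d * ‖h x‖ ≤ N) →
      ∀ η : ℝ, 0 < η → η ≤ 1 → ∀ α : ℝ, ∀ q : EuclideanSpace ℝ (Fin d),
        (∫ p : EuclideanSpace ℝ (Fin d),
            ‖h (p - q)‖ /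
              ‖((α - ‖p‖ ^ 2 / 2 : ℝ) : ℂ) + (η : ℂ) * Complex.I‖ ^ ((2 : ℝ) - a))
          ≤ C * N * η ^ (-(1 - a)) /
              (Real.sqrt (1 + α ^ 2) ^ (a / 2) *
                Real.sqrt (1 + (‖q‖ - Real.sqrt (2 * |α|)) ^ 2)) := by
  have hd' : (3 : ℝ) ≤ d := by exact_mod_cast hd
  obtain ⟨C, hC, hbound⟩ := resolvent_power_weighted_bound_general (F := ℂ) (κ := d) (b := 2 - a)
    (c := a / 2) (volume : Measure (EuclideanSpace ℝ (Fin d))) (by simp; omega) (by simp; linarith)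
    (by linarith) (by linarith)
  rw [show 1 - (2 - a) = -(1 - a) by ring] at hbound
  exact ⟨C, hC, fun h hh N hN η hη _ ↦ hbound h hh.aestronglyMeasurable N (by simpa using hN) η hη⟩
end

section
/- For an integer n ≥ 2, let c(n) := ∑_{Γ} (−1)^{|Γ|}, where the sum runs over all sets Γ of edges of the complete graph K_n on vertex set {1,…,n} such that the spanning subgraph ({1,…,n}, Γ) is connected, and |Γ| denotes the number of edges of Γ. Then |c(n)| ≤ n^{n−2}. -/
/-- The Ursell coefficient `c(n)`: the sum of `(-1)^{|Γ|}` over all edge sets `Γ` of the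
complete graph on `{1,…,n}` (sets of non-diagonal unordered pairs) such that the spanning
subgraph with edge set `Γ` is connected. -/
noncomputable def ursell (n : ℕ) : ℤ := by
  classical
  exact ∑ Γ ∈ (Finset.univ : Finset (Finset (Sym2 (Fin n)))).filter
      (fun Γ : Finset (Sym2 (Fin n)) => (∀ e ∈ Γ, ¬e.IsDiag) ∧
        (SimpleGraph.fromEdgeSet (↑Γ : Set (Sym2 (Fin n)))).Connected),
    (-1 : ℤ) ^ Γ.card

/-!
Fix a root `r` and sort the graphs on a vertex set `S` by the set `U` of vertices which `r` does not
reach. If `U` contains two vertices, then toggling the edge between them is a sign-reversing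
involution, so those graphs contribute nothing to `∑ (-1)^{|Γ|}`. If `U = {v}`, then `v` is
isolated and the rest is a connected graph on `S \ {v}`. As the sum over all graphs vanishes when
`S` has at least two vertices, the signed count `c` of connected graphs satisfies
`c(S) = -∑_{v ≠ r} c(S \ {v})`, so `c(n) = (-1)^{n-1} (n-1)!`, and
`(n-1)! = 2 · 3 ⋯ (n-1)` has `n-2` factors below `n`.
-/

open Finset
open scoped Nat

namespace Ursell

section PowersetSums

variable {α : Type*}

lemma sum_powerset_filter_neg_one_pow_card_eq_zero [DecidableEq α] {R : Type*} [Ring R]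
    {E : Finset α} {a : α} (ha : a ∈ E) {p : Finset α → Prop} [DecidablePred p]
    (hp : ∀ Γ ⊆ E.erase a, (p (insert a Γ) ↔ p Γ)) :
    ∑ Γ ∈ E.powerset with p Γ, (-1 : R) ^ #Γ = 0 := by
  rw [sum_filter, ← insert_erase ha, sum_powerset_insert (notMem_erase a E), ← sum_add_distrib]
  refine sum_eq_zero fun Γ hΓ => ?_
  have hΓE : Γ ⊆ E.erase a := mem_powerset.1 hΓ
  have haΓ : a ∉ Γ := fun h => notMem_erase a E (hΓE h)
  simp only [hp Γ hΓE, card_insert_of_notMem haΓ, pow_succ]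
  split_ifs <;> simp

lemma sum_powerset_eq_add_sum_singleton {M : Type*} [AddCommMonoid M] {S : Finset α}
    {f : Finset α → M} (hf : ∀ U ⊆ S, U.Nontrivial → f U = 0) :
    ∑ U ∈ S.powerset, f U = f ∅ + ∑ v ∈ S, f {v} := by
  classical
  induction S using Finset.induction_on with
  | empty => simp
  | insert a S ha ih =>
    have hsum_insert : ∑ U ∈ S.powerset, f (insert a U) = f {a} := by
      refine sum_eq_single_of_mem ∅ (empty_mem_powerset S) fun U hU hne => ?_
      have hUS : U ⊆ S := mem_powerset.1 hU
      obtain ⟨b, hb⟩ := nonempty_iff_ne_empty.2 hne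
      exact hf _ (insert_subset_insert a hUS)
        ⟨a, mem_insert_self a U, b, mem_insert_of_mem hb, fun h => ha (h ▸ hUS hb)⟩
    rw [sum_powerset_insert ha, ih fun U hU => hf U (hU.trans (subset_insert a S)), hsum_insert,
      sum_insert ha, add_assoc, add_comm (f {a})]

end PowersetSums

section Reachability

variable {V : Type*} {G : SimpleGraph V} {r u v x : V}

lemma reachable_sup_edge_iff (hu : ¬G.Reachable r u) (hv : ¬G.Reachable r v) :
    (G ⊔ SimpleGraph.edge u v).Reachable r x ↔ G.Reachable r x := by
  refine ⟨fun hx => ?_, fun hx => hx.mono le_sup_left⟩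
  rw [SimpleGraph.reachable_iff_reflTransGen] at hx
  induction hx with
  | refl => exact .refl r
  | tail _ hadj hreach =>
    rcases hadj with hG | hedge
    · exact hreach.trans hG.reachable
    · rcases ((SimpleGraph.edge_adj ..).1 hedge).1 with ⟨rfl, -⟩ | ⟨rfl, -⟩
      · exact absurd hreach hu
      · exact absurd hreach hv

lemma not_reachable_of_forall_not_adj (hrv : r ≠ v) (hv : ∀ w, ¬G.Adj w v) :
    ¬G.Reachable r v := by
  rw [SimpleGraph.reachable_iff_reflTransGen]
  intro h
  obtain rfl | ⟨w, -, hwv⟩ := h.cases_tail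
  · exact hrv rfl
  · exact hv w hwv

end Reachability

variable {V : Type*}

open scoped Classical in
/-- The vertices in `S` outside the connected component of `r` in the graph with edge set `Γ`. -/
noncomputable def unreached (r : V) (S : Finset V) (Γ : Finset (Sym2 V)) : Finset V :=
  {x ∈ S | ¬(SimpleGraph.fromEdgeSet (Γ : Set (Sym2 V))).Reachable r x}

variable {r u v x y : V} {S U : Finset V} {Γ : Finset (Sym2 V)}

lemma mem_unreached :
    x ∈ unreached r S Γ ↔
      x ∈ S ∧ ¬(SimpleGraph.fromEdgeSet (Γ : Set (Sym2 V))).Reachable r x := by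
  simp [unreached]

lemma unreached_subset : unreached r S Γ ⊆ S :=
  fun _ hx => (mem_unreached.1 hx).1

lemma root_notMem_unreached : r ∉ unreached r S Γ :=
  fun h => (mem_unreached.1 h).2 (.refl r)

lemma unreached_eq_empty_iff :
    unreached r S Γ = ∅ ↔
      ∀ x ∈ S, (SimpleGraph.fromEdgeSet (Γ : Set (Sym2 V))).Reachable r x := by
  simp [unreached, filter_eq_empty_iff]

lemma mk_notMem_of_mem_unreached (hu : u ∈ S) (hur : u ∉ unreached r S Γ)
    (hv : v ∈ unreached r S Γ) : s(u, v) ∉ Γ := by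
  intro huv
  have hreach : (SimpleGraph.fromEdgeSet (Γ : Set (Sym2 V))).Reachable r u :=
    not_not.1 fun h => hur (mem_unreached.2 ⟨hu, h⟩)
  have hne : u ≠ v := fun h => hur (h ▸ hv)
  exact (mem_unreached.1 hv).2
    (hreach.trans (SimpleGraph.Adj.reachable ((SimpleGraph.fromEdgeSet_adj _).2 ⟨huv, hne⟩)))

variable [DecidableEq V]

lemma unreached_insert_of_mem (hu : u ∈ unreached r S Γ) (hv : v ∈ unreached r S Γ) :
    unreached r S (insert s(u, v) Γ) = unreached r S Γ := by
  ext x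
  rw [mem_unreached, mem_unreached, coe_insert, Set.insert_eq, Set.union_comm,
    SimpleGraph.fromEdgeSet_union, ← SimpleGraph.edge,
    reachable_sup_edge_iff (mem_unreached.1 hu).2 (mem_unreached.1 hv).2]

lemma unreached_insert_subset {e : Sym2 V} : unreached r S (insert e Γ) ⊆ unreached r S Γ := by
  intro x hx
  obtain ⟨hxS, hreach⟩ := mem_unreached.1 hx
  refine mem_unreached.2 ⟨hxS, fun h => hreach (h.mono ?_)⟩
  exact SimpleGraph.fromEdgeSet_mono (coe_subset.2 (subset_insert e Γ))

lemma unreached_insert_eq_iff (hu : u ∈ U) (hv : v ∈ U) :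
    unreached r S (insert s(u, v) Γ) = U ↔ unreached r S Γ = U := by
  constructor
  · rintro rfl
    exact (unreached_insert_of_mem (unreached_insert_subset hu) (unreached_insert_subset hv)).symm
  · rintro rfl
    exact unreached_insert_of_mem hu hv

/-- The edges of the complete graph on the vertex set `S`, as non-diagonal unordered pairs. -/
def completeEdges (S : Finset V) : Finset (Sym2 V) :=
  {e ∈ S.sym2 | ¬e.IsDiag}

lemma mk_mem_completeEdges : s(x, y) ∈ completeEdges S ↔ x ∈ S ∧ y ∈ S ∧ x ≠ y := by
  simp [completeEdges, and_assoc]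

lemma completeEdges_singleton : completeEdges {r} = ∅ := by
  ext ⟨x, y⟩
  simp only [mk_mem_completeEdges, mem_singleton, notMem_empty, iff_false]
  exact fun ⟨hx, hy, hxy⟩ => hxy (hx.trans hy.symm)

lemma subset_completeEdges_erase_iff :
    Γ ⊆ completeEdges (S.erase v) ↔ Γ ⊆ completeEdges S ∧ ∀ w, s(w, v) ∉ Γ := by
  constructor
  · refine fun h => ⟨h.trans (filter_subset_filter _ (sym2_mono (erase_subset v S))), ?_⟩
    exact fun w hw => notMem_erase v S (mk_mem_completeEdges.1 (h hw)).2.1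
  · rintro ⟨hΓ, hv⟩ ⟨x, y⟩ he
    obtain ⟨hx, hy, hxy⟩ := mk_mem_completeEdges.1 (hΓ he)
    refine mk_mem_completeEdges.2 ⟨mem_erase.2 ⟨?_, hx⟩, mem_erase.2 ⟨?_, hy⟩, hxy⟩
    · rintro rfl
      exact hv y (Sym2.eq_swap ▸ he)
    · rintro rfl
      exact hv x he

lemma unreached_eq_singleton_iff (hΓ : Γ ⊆ completeEdges S) (hv : v ∈ S) (hrv : r ≠ v) :
    unreached r S Γ = {v} ↔ (∀ w, s(w, v) ∉ Γ) ∧ unreached r (S.erase v) Γ = ∅ := by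
  have herase : unreached r (S.erase v) Γ = (unreached r S Γ).erase v := by
    ext x
    simp only [mem_unreached, mem_erase, and_assoc]
  rw [herase]
  constructor
  · intro hU
    refine ⟨fun w hw => ?_, by simp [hU]⟩
    obtain ⟨hwS, -, hwv⟩ := mk_mem_completeEdges.1 (hΓ hw)
    exact mk_notMem_of_mem_unreached (r := r) hwS (by simpa [hU] using hwv) (by simp [hU]) hw
  · rintro ⟨hisolated, hempty⟩
    have hvU : v ∈ unreached r S Γ :=
      mem_unreached.2 ⟨hv, not_reachable_of_forall_not_adj hrv fun w hw =>
        hisolated w ((SimpleGraph.fromEdgeSet_adj _).1 hw).1⟩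
    rw [← insert_erase hvU, hempty, insert_empty]

/-- The sum of `(-1)^{|Γ|}` over the graphs `Γ` on `S` in which exactly the vertices in `U` are not
reached from `r`. For `r ∈ S`, the case `U = ∅` is the signed count of the connected graphs
on `S`. -/
noncomputable def signedCount (r : V) (S U : Finset V) : ℤ :=
  ∑ Γ ∈ (completeEdges S).powerset with unreached r S Γ = U, (-1) ^ #Γ

lemma signedCount_eq_zero_of_nontrivial (hUS : U ⊆ S) (hU : U.Nontrivial) :
    signedCount r S U = 0 := by
  obtain ⟨u, hu, v, hv, huv⟩ := hU
  exact sum_powerset_filter_neg_one_pow_card_eq_zero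
    (mk_mem_completeEdges.2 ⟨hUS hu, hUS hv, huv⟩) fun _ _ => unreached_insert_eq_iff hu hv

lemma signedCount_eq_zero_of_root_mem (hr : r ∈ U) : signedCount r S U = 0 := by
  refine sum_eq_zero fun Γ hΓ => absurd hr ?_
  exact (mem_filter.1 hΓ).2 ▸ root_notMem_unreached

lemma signedCount_singleton_eq_erase (hv : v ∈ S) (hrv : r ≠ v) :
    signedCount r S {v} = signedCount r (S.erase v) ∅ := by
  refine sum_congr (Finset.ext fun Γ => ?_) fun _ _ => rfl
  simp only [mem_filter, mem_powerset, subset_completeEdges_erase_iff, and_assoc]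
  exact and_congr_right fun hΓ => unreached_eq_singleton_iff hΓ hv hrv

lemma sum_signedCount_eq_zero (hS : S.Nontrivial) :
    ∑ U ∈ S.powerset, signedCount r S U = 0 := by
  obtain ⟨x, hx, y, hy, hxy⟩ := hS
  unfold signedCount
  rw [sum_fiberwise_of_maps_to fun Γ _ => mem_powerset.2 unreached_subset]
  exact sum_powerset_neg_one_pow_card_of_nonempty ⟨s(x, y), mk_mem_completeEdges.2 ⟨hx, hy, hxy⟩⟩

lemma signedCount_empty_eq_neg_sum (hr : r ∈ S) (hS : S.Nontrivial) :
    signedCount r S ∅ = -∑ v ∈ S.erase r, signedCount r (S.erase v) ∅ := by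
  rw [eq_neg_iff_add_eq_zero]
  calc signedCount r S ∅ + ∑ v ∈ S.erase r, signedCount r (S.erase v) ∅
      = signedCount r S ∅ + ∑ v ∈ S.erase r, signedCount r S {v} := by
        refine congrArg _ (sum_congr rfl fun v hv => ?_)
        exact (signedCount_singleton_eq_erase (mem_of_mem_erase hv) (ne_of_mem_erase hv).symm).symm
    _ = signedCount r S ∅ + ∑ v ∈ S, signedCount r S {v} := by
        rw [← add_sum_erase S _ hr, signedCount_eq_zero_of_root_mem (mem_singleton_self r),
          zero_add]
    _ = ∑ U ∈ S.powerset, signedCount r S U :=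
        (sum_powerset_eq_add_sum_singleton fun _ => signedCount_eq_zero_of_nontrivial).symm
    _ = 0 := sum_signedCount_eq_zero hS

lemma signedCount_singleton_root : signedCount r {r} ∅ = 1 := by
  have hreach : unreached r {r} ∅ = ∅ :=
    unreached_eq_empty_iff.2 fun x hx => mem_singleton.1 hx ▸ .refl _
  simp [signedCount, completeEdges_singleton, filter_singleton, hreach]

lemma signedCount_empty_eq_factorial {k : ℕ} (hr : r ∈ S) (hS : #S = k + 1) :
    signedCount r S ∅ = (-1) ^ k * k ! := by
  induction k generalizing S with
  | zero =>
    obtain ⟨a, rfl⟩ := card_eq_one.1 hS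
    obtain rfl := mem_singleton.1 hr
    simp [signedCount_singleton_root]
  | succ k ih =>
    have hcount_erase : ∀ v ∈ S.erase r, signedCount r (S.erase v) ∅ = (-1) ^ k * k ! :=
      fun v hv => ih (mem_erase.2 ⟨(ne_of_mem_erase hv).symm, hr⟩)
        (by rw [card_erase_of_mem (mem_of_mem_erase hv), hS, Nat.add_sub_cancel])
    rw [signedCount_empty_eq_neg_sum hr (one_lt_card_iff_nontrivial.1 (by lia)),
      sum_congr rfl hcount_erase, sum_const, card_erase_of_mem hr, hS, Nat.add_sub_cancel,
      nsmul_eq_mul, Nat.factorial_succ]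
    push_cast
    ring

end Ursell

open Ursell

lemma ursell_eq_signedCount {n : ℕ} (r : Fin n) : ursell n = signedCount r univ ∅ := by
  classical
  refine sum_congr (Finset.ext fun Γ => ?_) fun _ _ => rfl
  simp only [mem_filter, mem_univ, true_and, mem_powerset]
  refine and_congr (by simp [subset_iff, completeEdges]) ?_
  simp only [unreached_eq_empty_iff, mem_univ, true_imp_iff,
    SimpleGraph.connected_iff_exists_forall_reachable]
  exact ⟨fun ⟨v, hv⟩ x => (hv r).symm.trans (hv x), fun h => ⟨r, h⟩⟩

theorem ursell_succ (k : ℕ) : ursell (k + 1) = (-1) ^ k * k ! := by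
  rw [ursell_eq_signedCount 0, signedCount_empty_eq_factorial (mem_univ 0) (card_fin (k + 1))]

lemma factorial_succ_le_succ_pow (m : ℕ) : (m + 1)! ≤ (m + 1) ^ m := by
  simpa only [Nat.factorial_one, one_mul, add_comm 1 m] using
    (Nat.factorial_mul_ascFactorial 1 m).symm.trans_le
      (Nat.mul_le_mul_left _ (Nat.ascFactorial_le_pow_add 1 m))

/-- Estimate (5.8) of the paper: the Ursell coefficients of the connected-graph expansion
satisfy `|c(n)| ≤ n^{n-2}` for `n ≥ 2`. -/
theorem ursell_bound (n : ℕ) (hn : 2 ≤ n) : |ursell n| ≤ (n : ℤ) ^ (n - 2) := by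
  obtain ⟨m, rfl⟩ := Nat.exists_eq_add_of_le' hn
  calc |ursell (m + 2)| = (m + 1)! := by
        rw [ursell_succ, abs_mul, abs_neg_one_pow, one_mul, Nat.abs_cast]
    _ ≤ ((m + 1) ^ m : ℕ) := by exact_mod_cast factorial_succ_le_succ_pow m
    _ ≤ ((m + 2 : ℕ) : ℤ) ^ m := by exact_mod_cast Nat.pow_le_pow_left (Nat.le_succ (m + 1)) m
end

section
/- Let k ≥ 1 and let σ be a permutation of {1,…,k}. Then the matrix M(σ) is invertible, and its inverse is M(σ^{−1}). -/
/-!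
The matrix `M(σ)` permutes the indicator vectors `e_m` of the initial segments `{1,…,m}` by
`M(σ) e_m = e_{σ̃(m)}`, since its `j`-th column is `e_{σ̃(j)} - e_{σ̃(j-1)}` and the first `m`
columns telescope. The differences of consecutive `e_m` are the standard basis, so a matrix is
determined by its action on the `e_m`, and `M(στ) = M(σ) M(τ)` because `σ̃ ∘ τ̃` extends `στ`.
-/

/-- The extension `σ̃` of a permutation `σ` of `{1,…,k}` to `{0,1,…,k+1}`, with
`σ̃(0) = 0` and `σ̃(k+1) = k+1`.  Here `σ : Equiv.Perm (Fin k)` acts on `{0,…,k-1}`,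
shifted by one. -/
def sigmaTilde (k : ℕ) (σ : Equiv.Perm (Fin k)) (j : ℕ) : ℕ :=
  if h : 1 ≤ j ∧ j ≤ k then ((σ ⟨j - 1, by omega⟩ : Fin k) : ℕ) + 1 else j

/-- The `(k+1) × (k+1)` matrix `M(σ)` of the paper, with rows and columns indexed by
`{1,…,k+1}` (here coded by `Fin (k+1)` shifted by one):
`M(σ)_{ij} = 1` if `σ̃(j-1) < i ≤ σ̃(j)`, `M(σ)_{ij} = -1` if `σ̃(j) < i ≤ σ̃(j-1)`,
and `M(σ)_{ij} = 0` otherwise. -/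
def Mmat (k : ℕ) (σ : Equiv.Perm (Fin k)) : Matrix (Fin (k + 1)) (Fin (k + 1)) ℤ :=
  Matrix.of fun i j =>
    if sigmaTilde k σ (j : ℕ) < (i : ℕ) + 1 ∧ (i : ℕ) + 1 ≤ sigmaTilde k σ ((j : ℕ) + 1) then 1
    else if sigmaTilde k σ ((j : ℕ) + 1) < (i : ℕ) + 1 ∧ (i : ℕ) + 1 ≤ sigmaTilde k σ (j : ℕ)
      then -1
    else 0

open scoped Matrix

/-- The indicator vector `e_m` of the initial segment `{j | j < m}` of `Fin n`; it is the all-ones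
vector for `m ≥ n`. The vectors `e_1, …, e_n` serve as a basis on which `M(σ)` acts by `σ̃`. -/
def initialIndicator (R : Type*) [Zero R] [One R] (n m : ℕ) : Fin n → R :=
  fun j => if (j : ℕ) < m then 1 else 0

section InitialIndicator

variable {ι R : Type*} {n : ℕ}

theorem initialIndicator_zero [Zero R] [One R] : initialIndicator R n 0 = 0 := by
  ext j
  simp [initialIndicator]

theorem initialIndicator_succ [AddZeroClass R] [One R] (j : Fin n) :
    initialIndicator R n (j + 1) = initialIndicator R n j + Pi.single j 1 := by
  ext i
  rcases lt_trichotomy i j with h | rfl | h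
  · simp [initialIndicator, h, h.le, h.ne]
  · simp [initialIndicator]
  · simp [initialIndicator, h.not_ge, h.not_gt, h.ne']

theorem ext_mulVec_initialIndicator [NonAssocRing R] {A B : Matrix ι (Fin n) R}
    (h : ∀ m ≤ n, A *ᵥ initialIndicator R n m = B *ᵥ initialIndicator R n m) : A = B := by
  refine Matrix.ext_col fun j => ?_
  have hsucc := h (j + 1) j.isLt
  rw [initialIndicator_succ, Matrix.mulVec_add, Matrix.mulVec_add, h j j.isLt.le] at hsucc
  simpa only [Matrix.mulVec_single_one] using add_left_cancel hsucc

theorem mulVec_initialIndicator_of_col_eq_sub [NonAssocRing R] {A : Matrix ι (Fin n) R}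
    {f : ℕ → ι → R} (hA : ∀ j, A.col j = f (j + 1) - f j) {m : ℕ} (hm : m ≤ n) :
    A *ᵥ initialIndicator R n m = f m - f 0 := by
  induction m with
  | zero => rw [initialIndicator_zero, Matrix.mulVec_zero, sub_self]
  | succ m ih =>
    have hsucc := initialIndicator_succ (R := R) (⟨m, hm⟩ : Fin n)
    rw [hsucc, Matrix.mulVec_add, ih (Nat.le_of_succ_le hm), Matrix.mulVec_single_one, hA,
      add_comm, sub_add_sub_cancel]

end InitialIndicator

section Mmat

variable {k : ℕ} (σ τ : Equiv.Perm (Fin k))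

theorem sigmaTilde_zero : sigmaTilde k σ 0 = 0 := by
  simp [sigmaTilde]

theorem sigmaTilde_le {m : ℕ} (hm : m ≤ k + 1) : sigmaTilde k σ m ≤ k + 1 := by
  unfold sigmaTilde
  split_ifs <;> omega

theorem sigmaTilde_one (k m : ℕ) : sigmaTilde k 1 m = m := by
  unfold sigmaTilde
  split_ifs with hm
  · exact Nat.sub_add_cancel hm.1
  · rfl

theorem sigmaTilde_mul (m : ℕ) :
    sigmaTilde k (σ * τ) m = sigmaTilde k σ (sigmaTilde k τ m) := by
  by_cases hm : 1 ≤ m ∧ m ≤ k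
  · have hτ : 1 ≤ (τ ⟨m - 1, by omega⟩ : ℕ) + 1 ∧ (τ ⟨m - 1, by omega⟩ : ℕ) + 1 ≤ k := by omega
    simp [sigmaTilde, hm, hτ]
  · simp only [sigmaTilde, dif_neg hm]

theorem col_Mmat (j : Fin (k + 1)) :
    (Mmat k σ).col j = initialIndicator ℤ (k + 1) (sigmaTilde k σ (j + 1)) -
      initialIndicator ℤ (k + 1) (sigmaTilde k σ j) := by
  ext i
  simp only [Matrix.col_apply, Mmat, Matrix.of_apply, Pi.sub_apply, initialIndicator]
  split_ifs <;> omega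

theorem Mmat_mulVec_initialIndicator {m : ℕ} (hm : m ≤ k + 1) :
    Mmat k σ *ᵥ initialIndicator ℤ (k + 1) m = initialIndicator ℤ (k + 1) (sigmaTilde k σ m) := by
  rw [mulVec_initialIndicator_of_col_eq_sub
    (f := fun m => initialIndicator ℤ (k + 1) (sigmaTilde k σ m)) (col_Mmat σ) hm,
    sigmaTilde_zero, initialIndicator_zero, sub_zero]

theorem Mmat_one (k : ℕ) : Mmat k 1 = 1 := by
  refine ext_mulVec_initialIndicator fun m hm => ?_
  rw [Mmat_mulVec_initialIndicator 1 hm, sigmaTilde_one, Matrix.one_mulVec]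

theorem Mmat_mul : Mmat k (σ * τ) = Mmat k σ * Mmat k τ := by
  refine ext_mulVec_initialIndicator fun m hm => ?_
  rw [← Matrix.mulVec_mulVec, Mmat_mulVec_initialIndicator (σ * τ) hm,
    Mmat_mulVec_initialIndicator τ hm, Mmat_mulVec_initialIndicator σ (sigmaTilde_le τ hm),
    sigmaTilde_mul]

end Mmat

/-- Part (i) of the paper's Proposition 6.3: for every permutation `σ` of `{1,…,k}`,
the matrix `M(σ)` is invertible and its inverse is `M(σ⁻¹)`. -/
theorem Mmat_invertible_with_inverse
    (k : ℕ) (hk : 1 ≤ k) (σ : Equiv.Perm (Fin k)) :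
    Mmat k σ * Mmat k σ⁻¹ = 1 ∧ Mmat k σ⁻¹ * Mmat k σ = 1 := by
  constructor
  · rw [← Mmat_mul, mul_inv_cancel, Mmat_one]
  · rw [← Mmat_mul, inv_mul_cancel, Mmat_one]
end

section
/- Let k ≥ 1, γ > 0, and λ ∈ (0,1) with 2kλ^γ ≤ 1/2. Then for every integer D ≥ 0, ∑_{σ} λ^{γ·deg(σ)} ≤ 4·(2kλ^γ)^D, where the sum runs over all permutations σ of {1,…,k} with deg(σ) ≥ D. -/
/-- The point `(j, σ(j))` is a *peak*: `σ(j) < min {σ̃(j-1), σ̃(j+1)}`. -/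
def IsPeakAt (k : ℕ) (σ : Equiv.Perm (Fin k)) (j : ℕ) : Prop :=
  sigmaTilde k σ j < min (sigmaTilde k σ (j - 1)) (sigmaTilde k σ (j + 1))

/-- The point `(j, σ(j))` is a *valley*: `σ(j) > max {σ̃(j-1), σ̃(j+1)}`. -/
def IsValleyAt (k : ℕ) (σ : Equiv.Perm (Fin k)) (j : ℕ) : Prop :=
  max (sigmaTilde k σ (j - 1)) (sigmaTilde k σ (j + 1)) < sigmaTilde k σ j

/-- The point `(j, σ(j))` is a *ladder*: `σ(j) - 1 ∈ {σ̃(j-1), σ̃(j+1)}` and the point is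
not a valley. -/
def IsLadderAt (k : ℕ) (σ : Equiv.Perm (Fin k)) (j : ℕ) : Prop :=
  (sigmaTilde k σ j - 1 = sigmaTilde k σ (j - 1) ∨
    sigmaTilde k σ j - 1 = sigmaTilde k σ (j + 1)) ∧ ¬IsValleyAt k σ j

instance (k : ℕ) (σ : Equiv.Perm (Fin k)) (j : ℕ) : Decidable (IsPeakAt k σ j) := by
  unfold IsPeakAt; infer_instance

instance (k : ℕ) (σ : Equiv.Perm (Fin k)) (j : ℕ) : Decidable (IsValleyAt k σ j) := by
  unfold IsValleyAt; infer_instance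

instance (k : ℕ) (σ : Equiv.Perm (Fin k)) (j : ℕ) : Decidable (IsLadderAt k σ j) := by
  unfold IsLadderAt; infer_instance

/-- `ℓ(σ)`: the number of `j ∈ {1,…,k}` such that `(j, σ(j))` is a ladder. -/
def ladderCount (k : ℕ) (σ : Equiv.Perm (Fin k)) : ℕ :=
  ((Finset.Icc 1 k).filter fun j => IsLadderAt k σ j).card

/-- The degree of a permutation: `deg(σ) := k - ℓ(σ)`. -/
def permDegree (k : ℕ) (σ : Equiv.Perm (Fin k)) : ℕ := k - ladderCount k σ

/-!
Read `σ` value by value, recording the position of each value. A value whose point is a ladder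
sits next to its predecessor, and a run of consecutive such values keeps its direction. So `σ`
is determined by the positions of its `deg(σ)` non-ladder values ("breaks"), listed by increasing
value, each with the direction of the step that follows it, provided one can tell where the runs
end. That is why valleys are excluded from the ladders: if `v + 1` is a break, then every value
larger than `v` next to `v` is also a break, so the run cannot appear to continue at a position
where no break is recorded. Hence at most `(2k) ^ d` permutations have degree `d`, and the sum is
dominated by a geometric series.
-/

lemma sum_pow_le_of_card_fiber_le {α : Type*} (s : Finset α) (f : α → ℕ) {c x : ℝ}
    (hx : 0 ≤ x) (hcx : c * x < 1)
    (hcard : ∀ d, ((s.filter fun a => f a = d).card : ℝ) ≤ c ^ d) (D : ℕ) :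
    ∑ a ∈ s.filter (fun a => D ≤ f a), x ^ f a ≤ (c * x) ^ D / (1 - c * x) := by
  have hc : 0 ≤ c := by simpa only [pow_one] using (Nat.cast_nonneg _).trans (hcard 1)
  have hmaps : ∀ a ∈ s.filter (fun a => D ≤ f a), f a ∈ Finset.Ico D (s.sup f + 1) := by
    intro a ha
    obtain ⟨has, hDa⟩ := Finset.mem_filter.mp ha
    exact Finset.mem_Ico.mpr ⟨hDa, Nat.lt_succ_of_le (Finset.le_sup has)⟩
  have hfiber (d : ℕ) :
      ∑ a ∈ (s.filter fun a => D ≤ f a).filter (fun a => f a = d), x ^ f a ≤ (c * x) ^ d :=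
    calc ∑ a ∈ (s.filter fun a => D ≤ f a).filter (fun a => f a = d), x ^ f a
        ≤ ∑ a ∈ s.filter (fun a => f a = d), x ^ f a :=
          Finset.sum_le_sum_of_subset_of_nonneg
            (Finset.filter_subset_filter _ (Finset.filter_subset _ _))
            fun _ _ _ => pow_nonneg hx _
      _ = (s.filter fun a => f a = d).card * x ^ d := by
          rw [← nsmul_eq_mul]
          exact Finset.sum_eq_card_nsmul fun a ha => by rw [(Finset.mem_filter.mp ha).2]
      _ ≤ c ^ d * x ^ d := mul_le_mul_of_nonneg_right (hcard d) (pow_nonneg hx d)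
      _ = (c * x) ^ d := (mul_pow c x d).symm
  rw [← Finset.sum_fiberwise_of_maps_to hmaps]
  exact (Finset.sum_le_sum fun d _ => hfiber d).trans
    (geom_sum_Ico_le_of_lt_one (mul_nonneg hc hx) hcx)

section

variable {k : ℕ} {σ τ : Equiv.Perm (Fin k)} {i q v : ℕ}

lemma sigmaTilde_of_notMem (σ : Equiv.Perm (Fin k)) (hv : v ∉ Finset.Icc 1 k) :
    sigmaTilde k σ v = v :=
  dif_neg (Finset.mem_Icc.not.mp hv)

lemma sigmaTilde_mem_Icc (σ : Equiv.Perm (Fin k)) (hv : v ∈ Finset.Icc 1 k) :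
    sigmaTilde k σ v ∈ Finset.Icc 1 k := by
  rw [sigmaTilde, dif_pos (Finset.mem_Icc.mp hv)]
  exact Finset.mem_Icc.mpr ⟨Nat.le_add_left _ _, Fin.isLt _⟩

lemma sigmaTilde_succ (σ : Equiv.Perm (Fin k)) (x : Fin k) :
    sigmaTilde k σ (x + 1) = σ x + 1 :=
  dif_pos ⟨Nat.le_add_left _ _, x.isLt⟩

lemma sigmaTilde_left_injective : Function.Injective (sigmaTilde k) := by
  intro σ τ h
  ext x
  simpa only [sigmaTilde_succ, Nat.add_right_cancel_iff] using congrFun h (x + 1)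

lemma sigmaTilde_inv_sigmaTilde (σ : Equiv.Perm (Fin k)) (j : ℕ) :
    sigmaTilde k σ⁻¹ (sigmaTilde k σ j) = j := by
  by_cases hj : j ∈ Finset.Icc 1 k
  · obtain ⟨hj1, hjk⟩ := Finset.mem_Icc.mp hj
    obtain ⟨x, rfl⟩ : ∃ x : Fin k, j = x + 1 :=
      ⟨⟨j - 1, by omega⟩, (Nat.sub_add_cancel hj1).symm⟩
    rw [sigmaTilde_succ, sigmaTilde_succ, Equiv.Perm.coe_inv, Equiv.symm_apply_apply]
  · rw [sigmaTilde_of_notMem σ hj, sigmaTilde_of_notMem σ⁻¹ hj]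

lemma sigmaTilde_injective (σ : Equiv.Perm (Fin k)) : Function.Injective (sigmaTilde k σ) :=
  Function.LeftInverse.injective (sigmaTilde_inv_sigmaTilde σ)

/-- The position `σ̃⁻¹(v)` at which the value `v` occurs. -/
def valuePosition (σ : Equiv.Perm (Fin k)) (v : ℕ) : ℕ := sigmaTilde k σ⁻¹ v

lemma valuePosition_sigmaTilde (σ : Equiv.Perm (Fin k)) (j : ℕ) :
    valuePosition σ (sigmaTilde k σ j) = j :=
  sigmaTilde_inv_sigmaTilde σ j

lemma sigmaTilde_valuePosition (σ : Equiv.Perm (Fin k)) (v : ℕ) :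
    sigmaTilde k σ (valuePosition σ v) = v := by
  simpa only [valuePosition, inv_inv] using sigmaTilde_inv_sigmaTilde σ⁻¹ v

lemma valuePosition_injective (σ : Equiv.Perm (Fin k)) : Function.Injective (valuePosition σ) :=
  sigmaTilde_injective σ⁻¹

lemma valuePosition_zero (σ : Equiv.Perm (Fin k)) : valuePosition σ 0 = 0 :=
  sigmaTilde_of_notMem σ⁻¹ (by simp)

lemma sigmaTilde_eq_of_eqOn_valuePosition
    (hpos : Set.EqOn (valuePosition σ) (valuePosition τ) (Set.Iic v))
    (hq : sigmaTilde k σ q ≤ v) : sigmaTilde k τ q = sigmaTilde k σ q := by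
  have hτ : valuePosition τ (sigmaTilde k σ q) = q :=
    (hpos hq).symm.trans (valuePosition_sigmaTilde σ q)
  rw [← sigmaTilde_valuePosition τ (sigmaTilde k σ q), hτ]

/-- The *breaks* of `σ`: the values `σ(j)` for which `(j, σ(j))` is not a ladder. -/
def breakValues (σ : Equiv.Perm (Fin k)) : Finset ℕ :=
  ((Finset.Icc 1 k).filter fun j => ¬IsLadderAt k σ j).image (sigmaTilde k σ)

lemma card_breakValues (σ : Equiv.Perm (Fin k)) : (breakValues σ).card = permDegree k σ := by
  have hcard := Finset.card_filter_add_card_filter_not (s := Finset.Icc 1 k)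
    fun j => IsLadderAt k σ j
  rw [Nat.card_Icc] at hcard
  rw [breakValues, Finset.card_image_of_injective _ (sigmaTilde_injective σ), permDegree,
    ladderCount]
  omega

lemma sigmaTilde_mem_breakValues :
    sigmaTilde k σ q ∈ breakValues σ ↔ q ∈ Finset.Icc 1 k ∧ ¬IsLadderAt k σ q := by
  rw [breakValues, (sigmaTilde_injective σ).mem_finset_image, Finset.mem_filter]

lemma mem_breakValues :
    v ∈ breakValues σ ↔
      valuePosition σ v ∈ Finset.Icc 1 k ∧ ¬IsLadderAt k σ (valuePosition σ v) := by
  rw [← sigmaTilde_mem_breakValues, sigmaTilde_valuePosition]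

lemma mem_Icc_of_mem_breakValues (hv : v ∈ breakValues σ) : v ∈ Finset.Icc 1 k := by
  simpa only [sigmaTilde_valuePosition] using sigmaTilde_mem_Icc σ (mem_breakValues.mp hv).1

lemma valuePosition_succ_adjacent_of_notMem_breakValues (hv : v + 1 ≤ k)
    (hbreak : v + 1 ∉ breakValues σ) :
    valuePosition σ (v + 1) = valuePosition σ v + 1 ∨
      valuePosition σ (v + 1) + 1 = valuePosition σ v := by
  have hpos : valuePosition σ (v + 1) ∈ Finset.Icc 1 k :=
    sigmaTilde_mem_Icc σ⁻¹ (Finset.mem_Icc.mpr ⟨Nat.le_add_left _ _, hv⟩)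
  have hladder : IsLadderAt k σ (valuePosition σ (v + 1)) := by
    by_contra h
    exact hbreak (mem_breakValues.mpr ⟨hpos, h⟩)
  have hpos_pos : 1 ≤ valuePosition σ (v + 1) := (Finset.mem_Icc.mp hpos).1
  have hneighbour := hladder.1
  rw [sigmaTilde_valuePosition, Nat.add_sub_cancel] at hneighbour
  rcases hneighbour with hleft | hright
  · have := congrArg (valuePosition σ) hleft
    rw [valuePosition_sigmaTilde] at this
    omega
  · have := congrArg (valuePosition σ) hright
    rw [valuePosition_sigmaTilde] at this
    omega

lemma valuePosition_add_valuePosition_of_notMem_breakValues (hv : v + 1 + 1 ≤ k)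
    (hbreak₁ : v + 1 ∉ breakValues σ) (hbreak₂ : v + 1 + 1 ∉ breakValues σ) :
    valuePosition σ v + valuePosition σ (v + 1 + 1) = 2 * valuePosition σ (v + 1) := by
  have hne : valuePosition σ (v + 1 + 1) ≠ valuePosition σ v :=
    (valuePosition_injective σ).ne (by omega)
  have h₁ := valuePosition_succ_adjacent_of_notMem_breakValues (by omega) hbreak₁
  have h₂ := valuePosition_succ_adjacent_of_notMem_breakValues hv hbreak₂
  omega

-- A ladder at `q` has a larger neighbour, so its smaller neighbour `v` is the one just below it;
-- but then the ladder has value `v + 1`.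
lemma sigmaTilde_mem_breakValues_of_adjacent (hbreak : v + 1 ∈ breakValues σ)
    (hq : q ∈ Finset.Icc 1 k)
    (hadj : q = valuePosition σ v + 1 ∨ q + 1 = valuePosition σ v)
    (hlt : v < sigmaTilde k σ q) : sigmaTilde k σ q ∈ breakValues σ := by
  by_contra hnot
  have hladder : IsLadderAt k σ q := by
    by_contra h
    exact hnot (sigmaTilde_mem_breakValues.mpr ⟨hq, h⟩)
  have hne : sigmaTilde k σ q ≠ v + 1 := fun h => hnot (h ▸ hbreak)
  have hneighbour : sigmaTilde k σ (q - 1) = v ∨ sigmaTilde k σ (q + 1) = v := by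
    rcases hadj with hright | hleft
    · exact .inl (by rw [hright, Nat.add_sub_cancel, sigmaTilde_valuePosition])
    · exact .inr (by rw [hleft, sigmaTilde_valuePosition])
  obtain ⟨hpred, hvalley⟩ := hladder
  rw [IsValleyAt, max_lt_iff] at hvalley
  omega

lemma mem_breakValues_of_eqOn_valuePosition
    (hpos : Set.EqOn (valuePosition σ) (valuePosition τ) (Set.Iic v))
    (hv : v ∈ breakValues σ) : v ∈ breakValues τ := by
  have hposv : valuePosition σ v = valuePosition τ v := hpos Set.self_mem_Iic
  rw [mem_breakValues] at hv ⊢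
  rw [← hposv]
  refine ⟨hv.1, fun hτ => hv.2 ?_⟩
  have hσv := sigmaTilde_valuePosition σ v
  have hτv : sigmaTilde k τ (valuePosition σ v) = v := hposv ▸ sigmaTilde_valuePosition τ v
  have hστ (q : ℕ) : sigmaTilde k σ q ≤ v → sigmaTilde k τ q = sigmaTilde k σ q :=
    sigmaTilde_eq_of_eqOn_valuePosition hpos
  have hτσ (q : ℕ) : sigmaTilde k τ q ≤ v → sigmaTilde k σ q = sigmaTilde k τ q :=
    sigmaTilde_eq_of_eqOn_valuePosition hpos.symm
  simp only [IsLadderAt, IsValleyAt, max_lt_iff, hσv, hτv] at hτ ⊢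
  have := hστ (valuePosition σ v - 1)
  have := hστ (valuePosition σ v + 1)
  have := hτσ (valuePosition σ v - 1)
  have := hτσ (valuePosition σ v + 1)
  omega

-- If `v + 1` were no break of `τ`, its position `q` in `τ` would be next to `v`, so in `σ` it would
-- carry a value larger than `v`, hence a break; then `q` carries a break of `τ` as well.
lemma succ_mem_breakValues_of_eqOn_valuePosition
    (hbreaks : ∀ q, sigmaTilde k σ q ∈ breakValues σ → sigmaTilde k τ q ∈ breakValues τ)
    (hpos : Set.EqOn (valuePosition σ) (valuePosition τ) (Set.Iic v))
    (hv : v + 1 ∈ breakValues σ) : v + 1 ∈ breakValues τ := by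
  by_contra hτ
  have hvk := mem_Icc_of_mem_breakValues hv
  have hq : valuePosition τ (v + 1) ∈ Finset.Icc 1 k := sigmaTilde_mem_Icc τ⁻¹ hvk
  have hadj := valuePosition_succ_adjacent_of_notMem_breakValues (Finset.mem_Icc.mp hvk).2 hτ
  rw [← hpos Set.self_mem_Iic] at hadj
  have hlt : v < sigmaTilde k σ (valuePosition τ (v + 1)) := by
    by_contra hle
    have := sigmaTilde_eq_of_eqOn_valuePosition hpos (not_lt.mp hle)
    rw [sigmaTilde_valuePosition] at this
    omega
  have := hbreaks _ (sigmaTilde_mem_breakValues_of_adjacent hv hq hadj hlt)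
  rw [sigmaTilde_valuePosition] at this
  exact hτ this

lemma valuePosition_succ_eq_of_notMem_breakValues (hv : v + 1 ≤ k)
    (hpos : Set.EqOn (valuePosition σ) (valuePosition τ) (Set.Iic v))
    (hσ : v + 1 ∉ breakValues σ) (hτ : v + 1 ∉ breakValues τ)
    (hdir : v ∈ breakValues σ → (valuePosition σ (v + 1) = valuePosition σ v + 1 ↔
      valuePosition τ (v + 1) = valuePosition τ v + 1)) :
    valuePosition σ (v + 1) = valuePosition τ (v + 1) := by
  have hposv : valuePosition σ v = valuePosition τ v := hpos Set.self_mem_Iic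
  have hσ_adj := valuePosition_succ_adjacent_of_notMem_breakValues hv hσ
  have hτ_adj := valuePosition_succ_adjacent_of_notMem_breakValues hv hτ
  by_cases hbreak : v ∈ breakValues σ
  · have := hdir hbreak
    omega
  rcases v with _ | u
  · have := valuePosition_zero σ
    omega
  · have hbreakτ : u + 1 ∉ breakValues τ :=
      mt (mem_breakValues_of_eqOn_valuePosition hpos.symm) hbreak
    have hposu : valuePosition σ u = valuePosition τ u := hpos (Nat.le_succ u)
    have hσ_run := valuePosition_add_valuePosition_of_notMem_breakValues hv hbreak hσ
    have hτ_run := valuePosition_add_valuePosition_of_notMem_breakValues hv hbreakτ hτ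
    omega

/-- The position of the value `v`, and whether `v + 1` is located immediately to its right. -/
def stepCode (σ : Equiv.Perm (Fin k)) (v : ℕ) : ℕ × Bool :=
  (valuePosition σ v, decide (valuePosition σ (v + 1) = valuePosition σ v + 1))

/-- The code of `σ`: its `i`-th entry, counting from `0`, describes the `i`-th smallest break.
Only the entries with `i < deg(σ)` are meaningful. -/
noncomputable def breakCode (σ : Equiv.Perm (Fin k)) (i : ℕ) : ℕ × Bool :=
  stepCode σ (Nat.nth (· ∈ breakValues σ) i)

lemma breakCode_count (hv : v ∈ breakValues σ) :
    breakCode σ (Nat.count (· ∈ breakValues σ) v) = stepCode σ v := by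
  rw [breakCode, Nat.nth_count (p := (· ∈ breakValues σ)) hv]

lemma card_toFinset_breakValues (σ : Equiv.Perm (Fin k)) :
    (breakValues σ).finite_toSet.toFinset.card = permDegree k σ := by
  rw [Finset.finite_toSet_toFinset, card_breakValues]

lemma nth_mem_breakValues (hi : i < permDegree k σ) :
    Nat.nth (· ∈ breakValues σ) i ∈ breakValues σ :=
  Nat.nth_mem_of_lt_card (breakValues σ).finite_toSet
    (hi.trans_eq (card_toFinset_breakValues σ).symm)

lemma count_breakValues_lt (hv : v ∈ breakValues σ) :
    Nat.count (· ∈ breakValues σ) v < permDegree k σ :=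
  (Nat.count_lt_card (breakValues σ).finite_toSet hv).trans_eq
    (card_toFinset_breakValues σ)

lemma sigmaTilde_mem_breakValues_of_breakCode_eq (hdeg : permDegree k σ = permDegree k τ)
    (hcode : ∀ i < permDegree k σ, breakCode σ i = breakCode τ i)
    (hq : sigmaTilde k σ q ∈ breakValues σ) : sigmaTilde k τ q ∈ breakValues τ := by
  have hi := count_breakValues_lt hq
  have hpos := congrArg Prod.fst (hcode _ hi)
  rw [breakCode_count hq] at hpos
  simp only [stepCode, breakCode, valuePosition_sigmaTilde] at hpos
  rw [hpos, sigmaTilde_valuePosition]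
  exact nth_mem_breakValues (hdeg ▸ hi)

lemma stepCode_eq_of_breakCode_eq
    (hcode : ∀ i < permDegree k σ, breakCode σ i = breakCode τ i)
    (hpos : Set.EqOn (valuePosition σ) (valuePosition τ) (Set.Iio v))
    (hσ : v ∈ breakValues σ) (hτ : v ∈ breakValues τ) : stepCode σ v = stepCode τ v := by
  have hcount : Nat.count (· ∈ breakValues σ) v = Nat.count (· ∈ breakValues τ) v := by
    simp only [Nat.count_eq_card_filter_range]
    congr 1
    refine Finset.filter_congr fun u hu => ?_
    have hposu : Set.EqOn (valuePosition σ) (valuePosition τ) (Set.Iic u) :=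
      hpos.mono (Set.Iic_subset_Iio.mpr (Finset.mem_range.mp hu))
    exact ⟨mem_breakValues_of_eqOn_valuePosition hposu,
      mem_breakValues_of_eqOn_valuePosition hposu.symm⟩
  rw [← breakCode_count hσ, ← breakCode_count hτ, ← hcount]
  exact hcode _ (count_breakValues_lt hσ)

lemma valuePosition_succ_eq_of_breakCode_eq (hdeg : permDegree k σ = permDegree k τ)
    (hcode : ∀ i < permDegree k σ, breakCode σ i = breakCode τ i)
    (hpos : Set.EqOn (valuePosition σ) (valuePosition τ) (Set.Iic v)) :
    valuePosition σ (v + 1) = valuePosition τ (v + 1) := by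
  by_cases hvk : v + 1 ∈ Finset.Icc 1 k
  swap
  · exact (sigmaTilde_of_notMem σ⁻¹ hvk).trans (sigmaTilde_of_notMem τ⁻¹ hvk).symm
  have hcode' : ∀ i < permDegree k τ, breakCode τ i = breakCode σ i := fun i hi =>
    (hcode i (hdeg ▸ hi)).symm
  have hbreak_iff : v + 1 ∈ breakValues σ ↔ v + 1 ∈ breakValues τ :=
    ⟨succ_mem_breakValues_of_eqOn_valuePosition
        (fun _ => sigmaTilde_mem_breakValues_of_breakCode_eq hdeg hcode) hpos,
      succ_mem_breakValues_of_eqOn_valuePosition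
        (fun _ => sigmaTilde_mem_breakValues_of_breakCode_eq hdeg.symm hcode') hpos.symm⟩
  by_cases hbreak : v + 1 ∈ breakValues σ
  · have hpos_lt : Set.EqOn (valuePosition σ) (valuePosition τ) (Set.Iio (v + 1)) :=
      hpos.mono fun _ => Nat.le_of_lt_succ
    exact congrArg Prod.fst
      (stepCode_eq_of_breakCode_eq hcode hpos_lt hbreak (hbreak_iff.mp hbreak))
  · refine valuePosition_succ_eq_of_notMem_breakValues (Finset.mem_Icc.mp hvk).2 hpos hbreak
      (mt hbreak_iff.mpr hbreak) fun hv => ?_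
    have hstep := stepCode_eq_of_breakCode_eq hcode (hpos.mono Set.Iio_subset_Iic_self) hv
      (mem_breakValues_of_eqOn_valuePosition hpos hv)
    exact decide_eq_decide.mp (congrArg Prod.snd hstep)

theorem eq_of_breakCode_eq (hdeg : permDegree k σ = permDegree k τ)
    (hcode : ∀ i < permDegree k σ, breakCode σ i = breakCode τ i) : σ = τ := by
  have hpos (v : ℕ) : Set.EqOn (valuePosition σ) (valuePosition τ) (Set.Iic v) := by
    induction v with
    | zero =>
      intro u hu
      rw [Nat.le_zero.mp hu, valuePosition_zero, valuePosition_zero]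
    | succ v ih =>
      intro u hu
      rcases Nat.le_succ_iff.mp hu with hle | rfl
      · exact ih hle
      · exact valuePosition_succ_eq_of_breakCode_eq hdeg hcode ih
  exact inv_injective (sigmaTilde_left_injective (funext fun v => hpos v Set.self_mem_Iic))

end

theorem card_permDegree_eq_le (k d : ℕ) :
    ((Finset.univ : Finset (Equiv.Perm (Fin k))).filter fun σ => permDegree k σ = d).card ≤
      (2 * k) ^ d := by
  have hcard : (Fintype.piFinset fun _ : Fin d =>
      Finset.Icc 1 k ×ˢ (Finset.univ : Finset Bool)).card = (2 * k) ^ d := by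
    simp [Fintype.card_piFinset, mul_comm]
  rw [← hcard]
  refine Finset.card_le_card_of_injOn (fun σ i => breakCode σ i) ?_ ?_
  · intro σ hσ
    have hdeg : permDegree k σ = d := (Finset.mem_filter.mp hσ).2
    refine Fintype.mem_piFinset.mpr fun i => Finset.mem_product.mpr ⟨?_, Finset.mem_univ _⟩
    exact (mem_breakValues.mp (nth_mem_breakValues (hdeg ▸ i.isLt))).1
  · intro σ hσ τ hτ hcode
    have hσd : permDegree k σ = d := (Finset.mem_filter.mp hσ).2
    have hτd : permDegree k τ = d := (Finset.mem_filter.mp hτ).2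
    exact eq_of_breakCode_eq (hσd.trans hτd.symm) fun i hi => congrFun hcode ⟨i, hσd ▸ hi⟩

theorem sum_lambda_pow_degree_le_general (k : ℕ) {x : ℝ} (hx : 0 ≤ x) (hkx : 2 * (k : ℝ) * x < 1)
    (D : ℕ) :
    ∑ σ ∈ (Finset.univ : Finset (Equiv.Perm (Fin k))).filter (fun σ => D ≤ permDegree k σ),
        x ^ permDegree k σ
      ≤ (2 * (k : ℝ) * x) ^ D / (1 - 2 * (k : ℝ) * x) :=
  sum_pow_le_of_card_fiber_le _ _ hx hkx
    (fun d => by exact_mod_cast card_permDegree_eq_le k d) D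

/-- Quantitative form of the paper's Lemma 7.2: if `2k λ^γ ≤ 1/2` then the sum of
`λ^{γ · deg(σ)}` over all permutations `σ` of `{1,…,k}` with `deg(σ) ≥ D` is at most
`4 (2k λ^γ)^D`. -/
theorem sum_lambda_pow_degree_le
    (k : ℕ) (hk : 1 ≤ k) (γ lam : ℝ) (hγ : 0 < γ) (hlam : lam ∈ Set.Ioo (0 : ℝ) 1)
    (hsmall : 2 * (k : ℝ) * lam ^ γ ≤ 1 / 2) (D : ℕ) :
    ∑ σ ∈ (Finset.univ : Finset (Equiv.Perm (Fin k))).filter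
        (fun σ => D ≤ permDegree k σ),
        lam ^ (γ * (permDegree k σ : ℝ))
      ≤ 4 * (2 * (k : ℝ) * lam ^ γ) ^ D := by
  have hx : 0 ≤ lam ^ γ := Real.rpow_nonneg hlam.1.le γ
  have hpow : 0 ≤ (2 * (k : ℝ) * lam ^ γ) ^ D := by positivity
  simp only [Real.rpow_mul_natCast hlam.1.le]
  refine (sum_lambda_pow_degree_le_general k hx (by linarith) D).trans ?_
  rw [div_le_iff₀ (by linarith)]
  nlinarith
end

section
/- Let m ≥ 1 and H ≥ 1 be integers. Then ∑_{(a_1,…,a_m)} ∏_{ν=1}^{m} (a_ν − 1)! ≤ (H − 1)!, where the sum runs over all sequences (a_1,…,a_m) of integers with a_ν ≥ 2 for every ν and a_1 + ⋯ + a_m = H (the empty sum being 0 if no such sequence exists). -/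
open Finset Nat

/-! Every product `∏ (a_ν - 1)!` divides `(∑ (a_ν - 1))! = (H - m)!`, and `H` has
`(H - 1).choose (m - 1)` compositions into `m` positive parts. Since
`(H - 1).choose (m - 1) * (H - m)! = (H - 1)! / (m - 1)!`, the bound already holds for `a_ν ≥ 1`,
with a factor `(m - 1)!` to spare. -/

theorem card_piAntidiag {ι : Type*} [DecidableEq ι] (s : Finset ι) (n : ℕ) :
    #(piAntidiag s n) = multichoose #s n := by
  rw [← card_finsuppAntidiag_nat_eq_multichoose, finsuppAntidiag, card_map, card_attach]

theorem sum_piAntidiag_prod_factorial_le {ι : Type*} [DecidableEq ι] (s : Finset ι) (n : ℕ) :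
    ∑ a ∈ piAntidiag s n, ∏ i ∈ s, (a i)! ≤ multichoose #s n * n ! := by
  rw [← card_piAntidiag, ← smul_eq_mul]
  refine sum_le_card_nsmul _ _ _ fun a ha ↦ ?_
  rw [← (mem_piAntidiag.1 ha).1]
  exact Nat.le_of_dvd (factorial_pos _) (prod_factorial_dvd_factorial_sum s a)

theorem multichoose_mul_factorial_mul_factorial {k : ℕ} (hk : 1 ≤ k) (n : ℕ) :
    multichoose k n * n ! * (k - 1)! = (k + n - 1)! := by
  have hsub : k + n - 1 - n = k - 1 := by omega
  rw [multichoose_eq, ← hsub]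
  exact choose_mul_factorial_mul_factorial (by omega)

theorem filter_le_piAntidiag_univ_add_sum {ι μ : Type*} [Fintype ι] [DecidableEq ι]
    [AddCancelCommMonoid μ] [PartialOrder μ] [CanonicallyOrderedAdd μ] [HasAntidiagonal μ]
    [DecidableEq μ] [DecidableLE μ] (c : ι → μ) (n : μ) :
    {a ∈ piAntidiag (univ : Finset ι) (n + ∑ i, c i) | ∀ i, c i ≤ a i} =
      (piAntidiag univ n).map (addRightEmbedding c) := by
  ext a
  simp only [mem_filter, mem_map, mem_piAntidiag, mem_univ, implies_true, and_true,
    addRightEmbedding_apply]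
  constructor
  · rintro ⟨hsum, hle⟩
    obtain ⟨b, rfl⟩ := exists_add_of_le (α := ι → μ) hle
    refine ⟨b, ?_, add_comm b c⟩
    simpa [sum_add_distrib, add_comm n] using hsum
  · rintro ⟨b, rfl, rfl⟩
    exact ⟨sum_add_distrib, fun i ↦ le_add_self⟩

theorem sum_prod_factorial_le_general {ι : Type*} [Fintype ι] [DecidableEq ι] [Nonempty ι]
    (H : ℕ) :
    (∑ a ∈ piAntidiag univ H with ∀ i : ι, 1 ≤ a i, ∏ i, (a i - 1)!) * (Fintype.card ι - 1)! ≤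
      (H - 1)! := by
  rcases lt_or_ge H (Fintype.card ι) with hlt | hge
  · have hempty : {a ∈ piAntidiag (univ : Finset ι) H | ∀ i : ι, 1 ≤ a i} = ∅ := by
      refine filter_eq_empty_iff.2 fun a ha hpos ↦ hlt.not_ge ?_
      rw [← (mem_piAntidiag.1 ha).1]
      simpa using sum_le_sum fun i (_ : i ∈ univ) ↦ hpos i
    simp [hempty]
  · obtain ⟨n, rfl⟩ := Nat.exists_eq_add_of_le' hge
    have hshift := filter_le_piAntidiag_univ_add_sum (fun _ : ι ↦ 1) n
    rw [sum_const, Finset.card_univ, smul_eq_mul, mul_one] at hshift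
    calc (∑ a ∈ piAntidiag univ (n + Fintype.card ι) with ∀ i : ι, 1 ≤ a i, ∏ i, (a i - 1)!) *
          (Fintype.card ι - 1)!
      _ = (∑ b ∈ piAntidiag (univ : Finset ι) n, ∏ i, (b i)!) * (Fintype.card ι - 1)! := by
        simp [hshift]
      _ ≤ multichoose (Fintype.card ι) n * n ! * (Fintype.card ι - 1)! := by
        gcongr
        exact sum_piAntidiag_prod_factorial_le univ n
      _ = (n + Fintype.card ι - 1)! := by
        rw [multichoose_mul_factorial_mul_factorial Fintype.card_pos, add_comm]

/-- Inequality (8.9) of the paper: summing the product `∏_ν (a_ν - 1)!` over all sequences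
`(a_1, …, a_m)` of integers `a_ν ≥ 2` with total sum `H` gives at most `(H-1)!`. -/
theorem sum_prod_factorial_le
    (m H : ℕ) (hm : 1 ≤ m) (hH : 1 ≤ H) :
    ∑ a ∈ (Finset.Nat.antidiagonalTuple m H).filter (fun a => ∀ ν, 2 ≤ a ν),
        ∏ ν, (a ν - 1)! ≤ (H - 1)! := by
  have : Nonempty (Fin m) := Fin.pos_iff_nonempty.1 hm
  rw [← piAntidiag_univ_fin_eq_antidiagonalTuple]
  refine (sum_le_sum_of_subset fun a ha ↦ ?_).trans <|
    (Nat.le_mul_of_pos_right _ (factorial_pos _)).trans (sum_prod_factorial_le_general H)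
  simp only [mem_filter] at ha ⊢
  exact ⟨ha.1, fun ν ↦ one_le_two.trans (ha.2 ν)⟩
end

section
/- Let d ≥ 3, κ ∈ (0,1] and δ ∈ (0,1]. There exist C > 0 and λ₀ ∈ (0,1) such that for all λ ∈ (0,λ₀), setting η := λ^{2+κ} and ζ := λ^{−κ−3δ}, and for all α ∈ ℝ and all r ∈ ℝ^d: ∫_{|p| ≤ ζ} dp / ( |α − |p|²/2 + iη| · (η + min(|p − r|, 1)) ) ≤ C · ζ^{d−2} · log(1/η). -/
open MeasureTheory

/-!
In polar coordinates the resolvent is radial, so only the average of the point singularity over a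
sphere of radius `ρ` matters. Caps of radius `ε` on the unit sphere have measure `O(ε ^ (n - 1))`,
so `‖ω - e‖⁻¹` is integrable over the sphere uniformly in `e` as soon as `n ≥ 3`; by scaling, the
singularity averages to `O(1 + ρ⁻¹)`. Of the Jacobian `ρ ^ (n - 1)` this leaves a factor `ρ` for the
radial integral `∫ ρ / |α - ρ ^ 2 / 2 + i η| dρ`, with primitive `arsinh ((ρ ^ 2 / 2 - α) / η)`;
as `arsinh b - arsinh a ≤ 2 arsinh ((b - a) / 2)`, its increment is logarithmic uniformly in `α`.
-/

open Set Metric Module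
open scoped ENNReal NNReal

lemma lintegral_Ioi_one_rpow_neg {s : ℝ} (hs : 1 < s) :
    ∫⁻ t in Ioi (1 : ℝ), ENNReal.ofReal (t ^ (-s)) = ENNReal.ofReal (s - 1)⁻¹ := by
  have hnonneg : ∀ᵐ t ∂volume.restrict (Ioi (1 : ℝ)), 0 ≤ t ^ (-s) :=
    (ae_restrict_mem measurableSet_Ioi).mono fun t (ht : 1 < t) =>
      Real.rpow_nonneg (one_pos.trans ht).le _
  rw [← ofReal_integral_eq_lintegral_ofReal (integrableOn_Ioi_rpow_of_lt (by linarith) one_pos)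
    hnonneg, integral_Ioi_rpow_of_lt (by linarith) one_pos, Real.one_rpow,
    show -s + 1 = -(s - 1) by ring, neg_div_neg_eq, one_div]

lemma lintegral_le_measure_univ_add_of_meas_lt_le_rpow {X : Type*} [MeasurableSpace X]
    {ν : Measure X} {f : X → ℝ≥0∞} (hf : AEMeasurable f ν) {K : ℝ≥0} {s : ℝ} (hs : 1 < s)
    (htail : ∀ t : ℝ, 1 ≤ t → ν {x | ENNReal.ofReal t < f x} ≤ K * ENNReal.ofReal (t ^ (-s))) :
    ∫⁻ x, f x ∂ν ≤ ν univ + K * ENNReal.ofReal (s - 1)⁻¹ := by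
  have hfinite : ∀ᵐ x ∂ν, f x ≠ ∞ := by
    have hdecay : Filter.Tendsto (fun t : ℝ => K * ENNReal.ofReal (t ^ (-s))) Filter.atTop
        (nhds 0) := by
      simpa using ENNReal.Tendsto.const_mul (ENNReal.tendsto_ofReal
        (tendsto_rpow_neg_atTop (zero_lt_one.trans hs))) (Or.inr ENNReal.coe_ne_top)
    refine nonpos_iff_eq_zero.1 (ge_of_tendsto hdecay ?_)
    filter_upwards [Filter.eventually_ge_atTop 1] with t ht
    refine (measure_mono fun x hx => ?_).trans (htail t ht)
    simp [not_not.1 hx]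
  have hlayer : ∫⁻ x, f x ∂ν = ∫⁻ t in Ioi (0 : ℝ), ν {x | t < (f x).toReal} := by
    rw [← lintegral_eq_lintegral_meas_lt ν (.of_forall fun _ => ENNReal.toReal_nonneg)
      hf.ennreal_toReal]
    exact lintegral_congr_ae (hfinite.mono fun x hx => (ENNReal.ofReal_toReal hx).symm)
  rw [hlayer, ← Ioc_union_Ioi_eq_Ioi zero_le_one,
    lintegral_union measurableSet_Ioi (Ioc_disjoint_Ioi le_rfl)]
  gcongr
  · calc ∫⁻ t in Ioc (0 : ℝ) 1, ν {x | t < (f x).toReal}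
        ≤ ∫⁻ _ in Ioc (0 : ℝ) 1, ν univ := lintegral_mono fun t => measure_mono (subset_univ _)
      _ = ν univ := by simp
  · rw [← lintegral_Ioi_one_rpow_neg hs, ← lintegral_const_mul' _ _ ENNReal.coe_ne_top]
    refine setLIntegral_mono' measurableSet_Ioi fun t (ht : 1 < t) => ?_
    refine (measure_mono fun x (hx : t < (f x).toReal) => ?_).trans (htail t ht.le)
    have hfx : f x < ∞ := (ENNReal.toReal_pos_iff.1 ((one_pos.trans ht).trans hx)).2
    exact (ENNReal.ofReal_lt_iff_lt_toReal (one_pos.trans ht).le hfx.ne).2 hx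

lemma arsinh_sub_arsinh_le {a b : ℝ} (hab : a ≤ b) :
    Real.arsinh b - Real.arsinh a ≤ 2 * Real.arsinh ((b - a) / 2) := by
  set u := (Real.arsinh b + Real.arsinh a) / 2
  set v := (Real.arsinh b - Real.arsinh a) / 2 with hv
  have hv0 : 0 ≤ v := by linarith [Real.arsinh_le_arsinh.2 hab]
  have hdiff : b - a = 2 * (Real.cosh u * Real.sinh v) := by
    rw [← Real.sinh_arsinh b, ← Real.sinh_arsinh a, show Real.arsinh b = u + v by ring,
      show Real.arsinh a = u - v by ring, Real.sinh_add, Real.sinh_sub]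
    ring
  have hsinh : Real.sinh v ≤ (b - a) / 2 := by
    rw [hdiff, mul_div_cancel_left₀ _ two_ne_zero]
    exact le_mul_of_one_le_left (Real.sinh_nonneg_iff.2 hv0) (Real.one_le_cosh u)
  have hv_le : v ≤ Real.arsinh ((b - a) / 2) := by
    rwa [← Real.sinh_le_sinh, Real.sinh_arsinh]
  linarith

lemma arsinh_le_log_one_add_two_mul {x : ℝ} (hx : 0 ≤ x) :
    Real.arsinh x ≤ Real.log (1 + 2 * x) := by
  rw [Real.le_log_iff_exp_le (by positivity), Real.exp_arsinh]
  have : √(1 + x ^ 2) ≤ 1 + x := Real.sqrt_le_iff.2 ⟨by positivity, by nlinarith⟩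
  linarith

lemma hasDerivAt_arsinh_sq_div_two_sub_div (α : ℝ) {η : ℝ} (hη : 0 < η) (ρ : ℝ) :
    HasDerivAt (fun ρ => Real.arsinh ((ρ ^ 2 / 2 - α) / η))
      (ρ * ‖((α - ρ ^ 2 / 2 : ℝ) : ℂ) + (η : ℂ) * Complex.I‖⁻¹) ρ := by
  have hinner : HasDerivAt (fun ρ : ℝ => (ρ ^ 2 / 2 - α) / η) (ρ / η) ρ := by
    refine ((((hasDerivAt_pow 2 ρ).div_const 2).sub_const α).div_const η).congr_deriv ?_
    norm_num
  have hnorm : ‖((α - ρ ^ 2 / 2 : ℝ) : ℂ) + (η : ℂ) * Complex.I‖ =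
      η * √(1 + ((ρ ^ 2 / 2 - α) / η) ^ 2) := by
    rw [Complex.norm_add_mul_I, ← Real.sqrt_sq hη.le, ← Real.sqrt_mul (sq_nonneg _),
      Real.sqrt_sq hη.le]
    congr 1
    field_simp
    ring
  convert hinner.arsinh using 1
  rw [hnorm, mul_inv, smul_eq_mul]
  ring

lemma continuous_mul_inv_norm_resolvent (α : ℝ) {η : ℝ} (hη : 0 < η) :
    Continuous fun ρ : ℝ => ρ * ‖((α - ρ ^ 2 / 2 : ℝ) : ℂ) + (η : ℂ) * Complex.I‖⁻¹ := by
  have hne (ρ : ℝ) : ‖((α - ρ ^ 2 / 2 : ℝ) : ℂ) + (η : ℂ) * Complex.I‖ ≠ 0 := by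
    rw [Complex.norm_add_mul_I]; positivity
  exact continuous_id.mul (Continuous.inv₀ (by fun_prop) hne)

lemma intervalIntegral_mul_inv_norm_resolvent_le (α : ℝ) {η : ℝ} (hη : 0 < η) (R : ℝ) :
    ∫ ρ in 0..R, ρ * ‖((α - ρ ^ 2 / 2 : ℝ) : ℂ) + (η : ℂ) * Complex.I‖⁻¹ ≤
      2 * Real.log (1 + R ^ 2 / η) := by
  calc ∫ ρ in 0..R, ρ * ‖((α - ρ ^ 2 / 2 : ℝ) : ℂ) + (η : ℂ) * Complex.I‖⁻¹
      = Real.arsinh ((R ^ 2 / 2 - α) / η) - Real.arsinh ((0 ^ 2 / 2 - α) / η) :=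
        intervalIntegral.integral_eq_sub_of_hasDerivAt
          (fun ρ _ => hasDerivAt_arsinh_sq_div_two_sub_div α hη ρ)
          ((continuous_mul_inv_norm_resolvent α hη).intervalIntegrable _ _)
    _ ≤ 2 * Real.arsinh (((R ^ 2 / 2 - α) / η - (0 ^ 2 / 2 - α) / η) / 2) :=
        arsinh_sub_arsinh_le (by gcongr ?_ / _; nlinarith [sq_nonneg R])
    _ = 2 * Real.arsinh (R ^ 2 / η / 4) := by ring_nf
    _ ≤ 2 * Real.log (1 + 2 * (R ^ 2 / η / 4)) := by
        gcongr
        exact arsinh_le_log_one_add_two_mul (by positivity)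
    _ ≤ 2 * Real.log (1 + R ^ 2 / η) := by
        have : 0 ≤ R ^ 2 / η := by positivity
        gcongr
        linarith

lemma setLIntegral_Ioc_mul_inv_norm_resolvent_le (α : ℝ) {η R : ℝ} (hη : 0 < η) (hR : 0 ≤ R) :
    ∫⁻ ρ in Ioc 0 R, ENNReal.ofReal ρ *
        ENNReal.ofReal ‖((α - ρ ^ 2 / 2 : ℝ) : ℂ) + (η : ℂ) * Complex.I‖⁻¹ ≤
      ENNReal.ofReal (2 * Real.log (1 + R ^ 2 / η)) := by
  have hnonneg : ∀ᵐ ρ ∂volume.restrict (Ioc 0 R),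
      0 ≤ ρ * ‖((α - ρ ^ 2 / 2 : ℝ) : ℂ) + (η : ℂ) * Complex.I‖⁻¹ :=
    (ae_restrict_mem measurableSet_Ioc).mono fun ρ hρ =>
      mul_nonneg hρ.1.le (inv_nonneg.2 (norm_nonneg _))
  calc ∫⁻ ρ in Ioc 0 R, ENNReal.ofReal ρ *
        ENNReal.ofReal ‖((α - ρ ^ 2 / 2 : ℝ) : ℂ) + (η : ℂ) * Complex.I‖⁻¹
      = ENNReal.ofReal
          (∫ ρ in 0..R, ρ * ‖((α - ρ ^ 2 / 2 : ℝ) : ℂ) + (η : ℂ) * Complex.I‖⁻¹) := by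
        rw [intervalIntegral.integral_of_le hR, ofReal_integral_eq_lintegral_ofReal
          (continuous_mul_inv_norm_resolvent α hη).integrableOn_Ioc hnonneg]
        exact setLIntegral_congr_fun measurableSet_Ioc fun ρ hρ => (ENNReal.ofReal_mul hρ.1.le).symm
    _ ≤ ENNReal.ofReal (2 * Real.log (1 + R ^ 2 / η)) :=
        ENNReal.ofReal_le_ofReal (intervalIntegral_mul_inv_norm_resolvent_le α hη R)

lemma log_one_add_rpow_sq_div_rpow_le {a b l : ℝ} (ha : 0 < a) (hba : 2 * b ≤ a) (hl : 0 < l)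
    (hl' : l ≤ 1 / 2) :
    Real.log (1 + (l ^ b) ^ 2 / l ^ a) ≤ (1 + (1 - 2 * b) / a) * Real.log (1 / l ^ a) := by
  have hratio : (l ^ b) ^ 2 / l ^ a = l ^ (2 * b - a) := by
    rw [← Real.rpow_mul_natCast hl.le, ← Real.rpow_sub hl, mul_comm, Nat.cast_two]
  have hone : 1 ≤ l ^ (2 * b - a) :=
    Real.one_le_rpow_of_pos_of_le_one_of_nonpos hl (by linarith) (by linarith)
  have htwo : 2 ≤ l⁻¹ := by
    rw [le_inv_comm₀ two_pos hl]; linarith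
  calc Real.log (1 + (l ^ b) ^ 2 / l ^ a)
      ≤ Real.log (l⁻¹ * l ^ (2 * b - a)) := by
        rw [hratio]
        exact Real.log_le_log (by positivity) (by nlinarith)
    _ = (1 + (1 - 2 * b) / a) * Real.log (1 / l ^ a) := by
        rw [Real.log_mul (by positivity) (by positivity), one_div, Real.log_inv, Real.log_inv,
          Real.log_rpow hl, Real.log_rpow hl]
        field_simp
        ring

lemma ofReal_inv_add_min_norm_one_le {V : Type*} [SeminormedAddGroup V] {η : ℝ} (hη : 0 < η)
    (x : V) : ENNReal.ofReal (η + min ‖x‖ 1)⁻¹ ≤ 1 + ‖x‖ₑ⁻¹ := by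
  have hmin : min ‖x‖ₑ 1 ≤ ENNReal.ofReal (η + min ‖x‖ 1) := by
    rw [← ofReal_norm, ← ENNReal.ofReal_one, ← ENNReal.ofReal_min]
    exact ENNReal.ofReal_le_ofReal (by linarith)
  rw [ENNReal.ofReal_inv_of_pos (by positivity)]
  refine (ENNReal.inv_le_inv.2 hmin).trans ?_
  rcases min_choice ‖x‖ₑ 1 with h | h <;> rw [h]
  · exact le_add_self
  · simp

section HaarMeasure

variable {E : Type*} [NormedAddCommGroup E] [NormedSpace ℝ E] [MeasurableSpace E] [BorelSpace E]
  [FiniteDimensional ℝ E] (μ : Measure E) [μ.IsAddHaarMeasure]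

lemma lintegral_eq_lintegral_Ioi_sphere [Nontrivial E] {f : E → ℝ≥0∞} (hf : Measurable f) :
    ∫⁻ p, f p ∂μ = ∫⁻ ρ in Ioi (0 : ℝ), ENNReal.ofReal (ρ ^ (finrank ℝ E - 1)) *
      ∫⁻ ω : sphere (0 : E) 1, f (ρ • (ω : E)) ∂μ.toSphere := by
  have hprod := μ.measurePreserving_homeomorphUnitSphereProd.lintegral_comp_emb
    (Homeomorph.measurableEmbedding _)
    (fun z : sphere (0 : E) 1 × Ioi (0 : ℝ) => f ((z.2 : ℝ) • (z.1 : E)))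
  rw [lintegral_prod_symm _ (by fun_prop), Measure.volumeIoiPow,
    lintegral_withDensity_eq_lintegral_mul _ (by fun_prop)
      (Measurable.lintegral_prod_left' (f := fun z : sphere (0 : E) 1 × Ioi (0 : ℝ) =>
        f ((z.2 : ℝ) • (z.1 : E))) (by fun_prop))] at hprod
  simp only [Pi.mul_apply] at hprod
  rw [lintegral_subtype_comap measurableSet_Ioi (fun ρ : ℝ =>
      ENNReal.ofReal (ρ ^ (finrank ℝ E - 1)) *
        ∫⁻ ω : sphere (0 : E) 1, f (ρ • (ω : E)) ∂μ.toSphere)] at hprod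
  have hpunctured : ∫⁻ p, f p ∂μ = ∫⁻ p : ({0}ᶜ : Set E), f p ∂μ.comap (↑) := by
    rw [lintegral_subtype_comap (measurableSet_singleton _).compl, restrict_compl_singleton]
  rw [hpunctured, ← hprod]
  refine lintegral_congr fun p => ?_
  have hp : ‖(p : E)‖ ≠ 0 := norm_ne_zero_iff.2 p.2
  simp [smul_smul, hp]

lemma setLIntegral_closedBall_eq_lintegral_Ioc_sphere [Nontrivial E] {f : E → ℝ≥0∞}
    (hf : Measurable f) (R : ℝ) :
    ∫⁻ p in closedBall 0 R, f p ∂μ = ∫⁻ ρ in Ioc 0 R, ENNReal.ofReal (ρ ^ (finrank ℝ E - 1)) *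
      ∫⁻ ω : sphere (0 : E) 1, f (ρ • (ω : E)) ∂μ.toSphere := by
  rw [← lintegral_indicator measurableSet_closedBall,
    lintegral_eq_lintegral_Ioi_sphere μ (hf.indicator measurableSet_closedBall),
    ← Iic_inter_Ioi, ← Measure.restrict_restrict measurableSet_Iic,
    ← lintegral_indicator measurableSet_Iic]
  refine setLIntegral_congr_fun measurableSet_Ioi fun ρ (hρ : 0 < ρ) => ?_
  have hmem (ω : sphere (0 : E) 1) : ρ • (ω : E) ∈ closedBall 0 R ↔ ρ ≤ R := by
    simp [norm_smul, abs_of_pos hρ]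
  by_cases hR : ρ ≤ R <;> simp [indicator, hmem, hR]

lemma ofReal_mul_toSphere_le_of_smul_mem [Nontrivial E] {A : Set (sphere (0 : E) 1)} {s : Set E}
    (hs : MeasurableSet s) {ε : ℝ}
    (hAs : ∀ ω ∈ A, ∀ ρ ∈ Ioo 1 (1 + ε), ρ • (ω : E) ∈ s) :
    ENNReal.ofReal ε * μ.toSphere A ≤ μ s := by
  calc ENNReal.ofReal ε * μ.toSphere A
      = ∫⁻ _ in Ioo 1 (1 + ε), μ.toSphere A := by
        rw [setLIntegral_const, Real.volume_Ioo, add_sub_cancel_left, mul_comm]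
    _ ≤ ∫⁻ ρ in Ioo 1 (1 + ε), ENNReal.ofReal (ρ ^ (finrank ℝ E - 1)) *
          ∫⁻ ω : sphere (0 : E) 1, s.indicator 1 (ρ • (ω : E)) ∂μ.toSphere := by
        refine setLIntegral_mono' measurableSet_Ioo fun ρ hρ => ?_
        have hmeas : MeasurableSet {ω : sphere (0 : E) 1 | ρ • (ω : E) ∈ s} :=
          measurableSet_preimage (by fun_prop) hs
        have hjacobian : 1 ≤ ENNReal.ofReal (ρ ^ (finrank ℝ E - 1)) :=
          ENNReal.one_le_ofReal.2 (one_le_pow₀ hρ.1.le)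
        refine le_trans ?_ (le_mul_of_one_le_left' hjacobian)
        exact (measure_mono fun ω hω => hAs ω hω ρ hρ).trans_eq (lintegral_indicator_one hmeas).symm
    _ ≤ ∫⁻ p, s.indicator 1 p ∂μ := by
        rw [lintegral_eq_lintegral_Ioi_sphere μ (measurable_one.indicator hs)]
        exact lintegral_mono_set fun ρ hρ => one_pos.trans hρ.1
    _ = μ s := lintegral_indicator_one hs

-- Thickened radially by `ε`, the cap stays inside a ball of radius `2 * ε`.
lemma toSphere_norm_sub_lt_le [Nontrivial E] (e : E) {ε : ℝ} (hε : 0 < ε) :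
    μ.toSphere {ω | ‖(ω : E) - e‖ < ε} ≤
      2 ^ finrank ℝ E * μ (ball 0 1) * ENNReal.ofReal (ε ^ (finrank ℝ E - 1)) := by
  have hthicken : ∀ ω ∈ {ω : sphere (0 : E) 1 | ‖(ω : E) - e‖ < ε}, ∀ ρ ∈ Ioo 1 (1 + ε),
      ρ • (ω : E) ∈ ball e (2 * ε) := by
    intro ω (hω : ‖(ω : E) - e‖ < ε) ρ hρ
    have hsplit : ρ • (ω : E) - e = (ρ - 1) • (ω : E) + (ω - e) := by
      rw [sub_smul, one_smul]; abel
    have hnorm : ‖(ρ - 1) • (ω : E)‖ = ρ - 1 := by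
      rw [norm_smul, norm_eq_of_mem_sphere, mul_one, Real.norm_of_nonneg (by linarith [hρ.1])]
    rw [mem_ball_iff_norm, hsplit]
    linarith [norm_add_le ((ρ - 1) • (ω : E)) (ω - e), hρ.2]
  rw [← ENNReal.mul_le_mul_iff_right (ENNReal.ofReal_pos.2 hε).ne' ENNReal.ofReal_ne_top]
  refine (ofReal_mul_toSphere_le_of_smul_mem μ measurableSet_ball hthicken).trans_eq ?_
  rw [μ.addHaar_ball _ (by positivity), mul_pow, ENNReal.ofReal_mul (by positivity),
    ← mul_pow_sub_one finrank_pos.ne' ε, ENNReal.ofReal_mul hε.le, ENNReal.ofReal_pow zero_le_two,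
    ENNReal.ofReal_ofNat]
  ring

lemma exists_lintegral_sphere_inv_enorm_sub_le (hn : 3 ≤ finrank ℝ E) :
    ∃ M : ℝ≥0, ∀ e : E, ∫⁻ ω : sphere (0 : E) 1, ‖(ω : E) - e‖ₑ⁻¹ ∂μ.toSphere ≤ M := by
  have : Nontrivial E := nontrivial_of_finrank_pos (R := ℝ) (by omega)
  set s : ℝ := ((finrank ℝ E - 1 : ℕ) : ℝ)
  have hs : 1 < s := by simp only [s]; exact_mod_cast (by omega : 1 < finrank ℝ E - 1)
  lift 2 ^ finrank ℝ E * μ (ball 0 1) to ℝ≥0 using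
    ENNReal.mul_ne_top (by finiteness) measure_ball_lt_top.ne with K hK
  lift μ.toSphere univ + K * ENNReal.ofReal (s - 1)⁻¹ to ℝ≥0 using
    by finiteness with M hM
  refine ⟨M, fun e => hM ▸ lintegral_le_measure_univ_add_of_meas_lt_le_rpow
    (by fun_prop) hs fun t ht => ?_⟩
  have ht0 : 0 < t := one_pos.trans_le ht
  calc μ.toSphere {ω | ENNReal.ofReal t < ‖(ω : E) - e‖ₑ⁻¹}
      = μ.toSphere {ω | ‖(ω : E) - e‖ < t⁻¹} := by
        congr with ω
        rw [ENNReal.lt_inv_iff_lt_inv, ← ENNReal.ofReal_inv_of_pos ht0,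
          ← ofReal_norm, ENNReal.ofReal_lt_ofReal_iff (inv_pos.2 ht0)]
    _ ≤ K * ENNReal.ofReal (t⁻¹ ^ (finrank ℝ E - 1)) :=
        hK ▸ toSphere_norm_sub_lt_le μ e (inv_pos.2 ht0)
    _ = K * ENNReal.ofReal (t ^ (-s)) := by
        rw [Real.rpow_neg ht0.le, Real.rpow_natCast, inv_pow]

lemma exists_mul_lintegral_sphere_inv_enorm_smul_sub_le (hn : 3 ≤ finrank ℝ E) :
    ∃ M : ℝ≥0, ∀ (r : E) {ρ : ℝ}, 0 < ρ →
      ENNReal.ofReal ρ * ∫⁻ ω : sphere (0 : E) 1, ‖ρ • (ω : E) - r‖ₑ⁻¹ ∂μ.toSphere ≤ M := by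
  obtain ⟨M, hM⟩ := exists_lintegral_sphere_inv_enorm_sub_le μ hn
  refine ⟨M, fun r ρ hρ => ?_⟩
  have hρ' : ENNReal.ofReal ρ ≠ 0 := (ENNReal.ofReal_pos.2 hρ).ne'
  rw [← lintegral_const_mul' _ _ ENNReal.ofReal_ne_top]
  refine (lintegral_congr fun ω => ?_).trans_le (hM (ρ⁻¹ • r))
  have hscale : ρ • (ω : E) - r = ρ • ((ω : E) - ρ⁻¹ • r) := by
    rw [smul_sub, smul_inv_smul₀ hρ.ne']
  rw [hscale, enorm_smul, Real.enorm_of_nonneg hρ.le,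
    ENNReal.mul_inv (Or.inl hρ') (Or.inl ENNReal.ofReal_ne_top),
    ENNReal.mul_inv_cancel_left hρ' ENNReal.ofReal_ne_top]

lemma exists_setLIntegral_closedBall_radial_mul_one_add_inv_le (hn : 3 ≤ finrank ℝ E) :
    ∃ M : ℝ≥0, ∀ {F : ℝ → ℝ≥0∞}, Measurable F → ∀ (r : E) {R : ℝ}, 1 ≤ R →
      ∫⁻ p in closedBall 0 R, F ‖p‖ * (1 + ‖p - r‖ₑ⁻¹) ∂μ ≤
        M * ENNReal.ofReal (R ^ (finrank ℝ E - 2)) * ∫⁻ ρ in Ioc 0 R, ENNReal.ofReal ρ * F ρ := by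
  have : Nontrivial E := nontrivial_of_finrank_pos (R := ℝ) (by omega)
  obtain ⟨M, hM⟩ := exists_mul_lintegral_sphere_inv_enorm_smul_sub_le μ hn
  lift μ.toSphere univ + M to ℝ≥0 using by finiteness with M' hM'
  refine ⟨M', fun {F} hF r R hR => ?_⟩
  have hslice : ∀ ρ ∈ Ioc 0 R, ENNReal.ofReal ρ *
      ∫⁻ ω : sphere (0 : E) 1, (1 + ‖ρ • (ω : E) - r‖ₑ⁻¹) ∂μ.toSphere ≤ M' * ENNReal.ofReal R := by
    intro ρ hρ
    rw [lintegral_add_left measurable_const, lintegral_one, mul_add, hM', add_mul, mul_comm]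
    refine add_le_add ?_ ?_
    · gcongr
      exact hρ.2
    · exact (hM r hρ.1).trans (le_mul_of_one_le_right' (ENNReal.one_le_ofReal.2 hR))
  rw [setLIntegral_closedBall_eq_lintegral_Ioc_sphere μ (by fun_prop),
    ← lintegral_const_mul' _ _ (by finiteness)]
  refine setLIntegral_mono' measurableSet_Ioc fun ρ hρ => ?_
  obtain ⟨k, hk⟩ := Nat.exists_eq_add_of_le' hn
  have hρ0 : 0 ≤ ρ := hρ.1.le
  calc ENNReal.ofReal (ρ ^ (finrank ℝ E - 1)) * ∫⁻ ω : sphere (0 : E) 1,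
          F ‖ρ • (ω : E)‖ * (1 + ‖ρ • (ω : E) - r‖ₑ⁻¹) ∂μ.toSphere
      = ENNReal.ofReal (ρ ^ k) * (ENNReal.ofReal ρ * F ρ) * (ENNReal.ofReal ρ *
          ∫⁻ ω : sphere (0 : E) 1, (1 + ‖ρ • (ω : E) - r‖ₑ⁻¹) ∂μ.toSphere) := by
        simp only [norm_smul, norm_eq_of_mem_sphere, Real.norm_of_nonneg hρ0, mul_one]
        rw [lintegral_const_mul _ (by fun_prop), hk, show k + 3 - 1 = k + 1 + 1 by rfl, pow_succ,
          pow_succ, ENNReal.ofReal_mul (by positivity), ENNReal.ofReal_mul (by positivity)]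
        ring
    _ ≤ ENNReal.ofReal (R ^ k) * (ENNReal.ofReal ρ * F ρ) * (M' * ENNReal.ofReal R) := by
        gcongr ENNReal.ofReal (?_ ^ k) * _ * ?_
        · exact hρ.2
        · exact hslice ρ hρ
    _ = M' * ENNReal.ofReal (R ^ (finrank ℝ E - 2)) * (ENNReal.ofReal ρ * F ρ) := by
        rw [hk, show k + 3 - 2 = k + 1 by rfl, pow_succ, ENNReal.ofReal_mul (by positivity)]
        ring

theorem exists_setIntegral_resolvent_mul_point_singularity_le (hn : 3 ≤ finrank ℝ E) :
    ∃ C : ℝ≥0, ∀ {η R : ℝ}, 0 < η → 1 ≤ R → ∀ (α : ℝ) (r : E),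
      ∫ p in closedBall 0 R, (‖((α - ‖p‖ ^ 2 / 2 : ℝ) : ℂ) + (η : ℂ) * Complex.I‖ *
          (η + min ‖p - r‖ 1))⁻¹ ∂μ ≤
        C * R ^ (finrank ℝ E - 2) * Real.log (1 + R ^ 2 / η) := by
  obtain ⟨M, hM⟩ := exists_setLIntegral_closedBall_radial_mul_one_add_inv_le μ hn
  refine ⟨2 * M, fun {η R} hη hR α r => ?_⟩
  have hR0 : 0 ≤ R := zero_le_one.trans hR
  have hlog : 0 ≤ Real.log (1 + R ^ 2 / η) :=
    Real.log_nonneg (le_add_of_nonneg_right (by positivity))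
  set F : ℝ → ℝ≥0∞ := fun ρ =>
    ENNReal.ofReal ‖((α - ρ ^ 2 / 2 : ℝ) : ℂ) + (η : ℂ) * Complex.I‖⁻¹
  rw [integral_eq_lintegral_of_nonneg_ae (.of_forall fun p => by positivity)
    (Measurable.aestronglyMeasurable (by fun_prop))]
  refine ENNReal.toReal_le_of_le_ofReal (by positivity) ?_
  calc ∫⁻ p in closedBall 0 R, ENNReal.ofReal (‖((α - ‖p‖ ^ 2 / 2 : ℝ) : ℂ) +
          (η : ℂ) * Complex.I‖ * (η + min ‖p - r‖ 1))⁻¹ ∂μ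
      ≤ ∫⁻ p in closedBall 0 R, F ‖p‖ * (1 + ‖p - r‖ₑ⁻¹) ∂μ := by
        refine lintegral_mono fun p => ?_
        rw [mul_inv, ENNReal.ofReal_mul (by positivity)]
        gcongr
        exact ofReal_inv_add_min_norm_one_le hη _
    _ ≤ M * ENNReal.ofReal (R ^ (finrank ℝ E - 2)) * ∫⁻ ρ in Ioc 0 R, ENNReal.ofReal ρ * F ρ :=
        hM (by fun_prop) r hR
    _ ≤ M * ENNReal.ofReal (R ^ (finrank ℝ E - 2)) *
          ENNReal.ofReal (2 * Real.log (1 + R ^ 2 / η)) := by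
        gcongr
        exact setLIntegral_Ioc_mul_inv_norm_resolvent_le α hη hR0
    _ = ENNReal.ofReal ((2 * M : ℝ≥0) * R ^ (finrank ℝ E - 2) * Real.log (1 + R ^ 2 / η)) := by
        rw [← ENNReal.ofReal_coe_nnreal, ← ENNReal.ofReal_mul (by positivity),
          ← ENNReal.ofReal_mul (by positivity)]
        push_cast
        ring_nf

theorem one_resolvent_point_singularity_bound_general (hn : 3 ≤ finrank ℝ E) {a b : ℝ}
    (ha : 0 < a) (hb : b ≤ 0) :
    ∃ C > (0 : ℝ), ∃ l₀ ∈ Ioo (0 : ℝ) 1, ∀ l : ℝ, 0 < l → l < l₀ → ∀ α : ℝ, ∀ r : E,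
      ∫ p in closedBall 0 (l ^ b), (‖((α - ‖p‖ ^ 2 / 2 : ℝ) : ℂ) +
          ((l ^ a : ℝ) : ℂ) * Complex.I‖ * (l ^ a + min ‖p - r‖ 1))⁻¹ ∂μ ≤
        C * (l ^ b) ^ ((finrank ℝ E : ℝ) - 2) * Real.log (1 / l ^ a) := by
  obtain ⟨C, hC⟩ := exists_setIntegral_resolvent_mul_point_singularity_le μ hn
  have hc : 0 < 1 + (1 - 2 * b) / a := by
    have : 0 ≤ (1 - 2 * b) / a := div_nonneg (by linarith) ha.le
    linarith
  refine ⟨(C + 1) * (1 + (1 - 2 * b) / a), by positivity, 1 / 2, by norm_num,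
    fun l hl hl' α r => ?_⟩
  have hζ : 1 ≤ l ^ b := Real.one_le_rpow_of_pos_of_le_one_of_nonpos hl (by linarith) hb
  calc ∫ p in closedBall 0 (l ^ b), (‖((α - ‖p‖ ^ 2 / 2 : ℝ) : ℂ) +
          ((l ^ a : ℝ) : ℂ) * Complex.I‖ * (l ^ a + min ‖p - r‖ 1))⁻¹ ∂μ
      ≤ C * (l ^ b) ^ (finrank ℝ E - 2) * Real.log (1 + (l ^ b) ^ 2 / l ^ a) :=
        hC (by positivity) hζ α r
    _ ≤ (C + 1) * (l ^ b) ^ (finrank ℝ E - 2) *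
          ((1 + (1 - 2 * b) / a) * Real.log (1 / l ^ a)) := by
        refine mul_le_mul ?_ (log_one_add_rpow_sq_div_rpow_le ha (by linarith) hl hl'.le)
          (Real.log_nonneg (le_add_of_nonneg_right (by positivity))) (by positivity)
        gcongr
        exact (lt_add_one _).le
    _ = _ := by
        rw [← Real.rpow_natCast, Nat.cast_sub (by omega), Nat.cast_two]
        ring

end HaarMeasure

/-- Estimate (A.5) from the proof of the paper's Appendix Lemma A.2: with `η = λ^{2+κ}`,
`ζ = λ^{-κ-3δ}`, one free resolvent paired with one point singularity
`(η + min(|p-r|,1))^{-1}` integrates over `{|p| ≤ ζ}` to at most `C ζ^{d-2} log(1/η)`,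
uniformly in the spectral parameter `α` and the location `r`. -/
theorem one_resolvent_point_singularity_bound
    (d : ℕ) (hd : 3 ≤ d) (κ δ : ℝ) (hκ : κ ∈ Set.Ioc (0 : ℝ) 1) (hδ : δ ∈ Set.Ioc (0 : ℝ) 1) :
    ∃ C > (0 : ℝ), ∃ l₀ ∈ Set.Ioo (0 : ℝ) 1, ∀ l : ℝ, 0 < l → l < l₀ →
      ∀ α : ℝ, ∀ r : EuclideanSpace ℝ (Fin d),
        (∫ p in Metric.closedBall (0 : EuclideanSpace ℝ (Fin d)) (l ^ (-κ - 3 * δ)),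
            (‖((α - ‖p‖ ^ 2 / 2 : ℝ) : ℂ) + ((l ^ (2 + κ) : ℝ) : ℂ) * Complex.I‖ *
              (l ^ (2 + κ) + min ‖p - r‖ 1))⁻¹)
          ≤ C * (l ^ (-κ - 3 * δ)) ^ ((d : ℝ) - 2) * Real.log (1 / l ^ (2 + κ)) := by
  simpa only [finrank_euclideanSpace_fin] using
    one_resolvent_point_singularity_bound_general (E := EuclideanSpace ℝ (Fin d)) volume
      (by simpa only [finrank_euclideanSpace_fin] using hd) (a := 2 + κ) (b := -κ - 3 * δ)
      (by linarith [hκ.1]) (by linarith [hκ.1, hδ.1])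
end
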